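/- arXiv:math/0611522 — 2 statements merged into one kernel-verified Lean document; each statement's English description precedes it below -/
import Mathlib

section
/- Let r and l be positive integers, d a positive integer dividing l, and ζ_d a primitive d-th root of unity. Then Q'_{(r^l)}(x; q, ζ_d) = (−1)^{rl(d−1)/d} · (p_d^{l/d} ∘ h_r)(x). -/
open MvPolynomial

noncomputable section MacdonaldPreliminaries

/-! ### Base fields: `KK = ℂ(q)` and `FF = ℂ(q)(t)` -/

/-- The field `ℂ(q)` of rational functions in the indeterminate `q`. -/
abbrev KK : Type := RatFunc ℂ

/-- The field `ℂ(q)(t) = ℂ(q,t)`, rational functions in `t` over `ℂ(q)`. -/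
abbrev FF : Type := RatFunc KK

/-- The indeterminate `q`, as an element of `ℂ(q)`. -/
def qK : KK := RatFunc.X

/-- The indeterminate `q`, as an element of `ℂ(q,t)`. -/
def qF : FF := RatFunc.C qK

/-- The indeterminate `t`, as an element of `ℂ(q,t)`. -/
def tF : FF := RatFunc.X

/-! ### The ring of symmetric functions

We model the ring `Λ_R` of symmetric functions over `R` as the free commutative
`R`-algebra on the power sums `p₁, p₂, p₃, …`, i.e. as the polynomial ring in
countably many variables `X k`, `k : ℕ+`, where `X k` represents the power sum `p_k`. -/

/-- The ring of symmetric functions over `R`: polynomials in the power sums `p_k = X k`. -/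
abbrev SymFn (R : Type) [CommSemiring R] : Type := MvPolynomial ℕ+ R

section Core

variable {R : Type} [Field R]

/-- The power sum `p_d` for `d : ℕ`, with `p_0 = 1` by convention. -/
def pN (d : ℕ) : SymFn R := if h : 0 < d then X (⟨d, h⟩ : ℕ+) else 1

/-- `p_λ = ∏ p_{λᵢ}` for a partition `λ` given as a multiset of positive parts. -/
def pPar (lam : Multiset ℕ+) : SymFn R := (lam.map fun k => (X k : SymFn R)).prod

/-- The complete homogeneous symmetric functions, defined by Newton's recursion
`n·h_n = ∑_{i=1}^n p_i · h_{n-i}` with `h_0 = 1`. -/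
def hsym : ℕ → SymFn R
  | 0 => 1
  | (n+1) => (((n : R) + 1)⁻¹) • ∑ i ∈ Finset.range (n+1),
      (X (⟨i+1, Nat.succ_pos i⟩ : ℕ+) : SymFn R) * hsym (n - i)
decreasing_by exact Nat.lt_succ_of_le (Nat.sub_le n i)

/-- `h_z` for an integer index, vanishing for negative `z` (used in Jacobi–Trudi). -/
def hInt (z : ℤ) : SymFn R := if 0 ≤ z then hsym (R := R) z.toNat else 0

/-- The parts of a partition (a multiset of positive integers), sorted decreasingly. -/
def descParts (lam : Multiset ℕ+) : List ℕ :=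
  ((lam.map fun a : ℕ+ => (a : ℕ)).sort (· ≤ ·)).reverse

/-- The weight `|λ|` of a partition. -/
def wt (lam : Multiset ℕ+) : ℕ := (lam.map fun a : ℕ+ => (a : ℕ)).sum

/-- The Schur function `s_λ`, via the Jacobi–Trudi formula
`s_λ = det(h_{λᵢ - i + j})₁≤i,j≤ℓ`. -/
def schur (lam : Multiset ℕ+) : SymFn R :=
  Matrix.det (Matrix.of fun i j : Fin (Multiset.card lam) =>
    hInt (R := R) ((((descParts lam).getD i 0 : ℕ) : ℤ) + (j : ℤ) - (i : ℤ)))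

/-- `h_ν = ∏ h_{νⱼ}` for a partition `ν`. -/
def hPar (nu : Multiset ℕ+) : SymFn R := (nu.map fun a => hsym (R := R) (a : ℕ)).prod

/-! ### Inner products -/

/-- The `(q,t)`-deformed weight `z_λ(q,t)` attached to the monomial `∏ (X k)^(m k)`,
namely `∏_k (m k)! · k^(m k) · ((1-q^k)/(1-t^k))^(m k)`. -/
def zwtQT (q t : R) (m : ℕ+ →₀ ℕ) : R :=
  ∏ k ∈ m.support,
    ((Nat.factorial (m k) : R) * ((k : ℕ) : R) ^ (m k) *
      ((1 - q ^ (k : ℕ)) / (1 - t ^ (k : ℕ))) ^ (m k))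

/-- The Macdonald inner product `⟨·,·⟩_{q,t}`, defined on the power sum basis by
`⟨p_λ, p_μ⟩_{q,t} = δ_{λμ} z_λ(q,t)`. -/
def innerQT (q t : R) (f g : SymFn R) : R :=
  ∑ m ∈ f.support, MvPolynomial.coeff m f * MvPolynomial.coeff m g * zwtQT q t m

/-- The classical weight `z_λ = ∏_k (m k)! k^(m k)` attached to a monomial. -/
def zwtH (m : ℕ+ →₀ ℕ) : R :=
  ∏ k ∈ m.support, ((Nat.factorial (m k) : R) * ((k : ℕ) : R) ^ (m k))

/-- The standard Hall inner product, `⟨p_λ, p_μ⟩ = δ_{λμ} z_λ`. -/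
def innerH (f g : SymFn R) : R :=
  ∑ m ∈ f.support, MvPolynomial.coeff m f * MvPolynomial.coeff m g * zwtH (R := R) m

/-- The internal (Kronecker) product `⋆`, determined by `p_λ ⋆ p_μ = δ_{λμ} z_λ p_λ`. -/
def star (f g : SymFn R) : SymFn R :=
  ∑ m ∈ f.support,
    MvPolynomial.monomial m (MvPolynomial.coeff m f * MvPolynomial.coeff m g * zwtH (R := R) m)

/-! ### Dominance order and the Macdonald basis -/

/-- Sum of the `k` largest parts of `λ`. -/
def pSum (lam : Multiset ℕ+) (k : ℕ) : ℕ := ((descParts lam).take k).sum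

/-- `μ` is strictly dominated by `λ`: same weight, `μ ≠ λ`, and all partial sums of the
decreasingly sorted parts of `μ` are at most those of `λ`. -/
def StrictDom (mu lam : Multiset ℕ+) : Prop :=
  mu ≠ lam ∧ wt mu = wt lam ∧ ∀ k, pSum mu k ≤ pSum lam k

/-- Characterization of the Macdonald basis `P_λ(x;q,t)` (obtained from the Schur basis by
Gram–Schmidt orthogonalization w.r.t. `⟨·,·⟩_{q,t}`): `P_λ` is unitriangular with respect to
the Schur functions of strictly dominated partitions, and the `P_λ` are pairwise orthogonal. -/
def IsMacdonaldBasis (q t : R) (P : Multiset ℕ+ → SymFn R) : Prop :=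
  (∀ lam, P lam - schur lam ∈
      Submodule.span R ((schur (R := R)) '' {mu | StrictDom mu lam})) ∧
  (∀ lam mu, lam ≠ mu → innerQT q t (P lam) (P mu) = 0)

/-- `Q_λ = P_λ / ⟨P_λ, P_λ⟩_{q,t}`. -/
def Qfam (q t : R) (P : Multiset ℕ+ → SymFn R) (lam : Multiset ℕ+) : SymFn R :=
  (innerQT q t (P lam) (P lam))⁻¹ • P lam

/-- The algebra endomorphism of `Λ_R` rescaling each power sum: `p_k ↦ g k · p_k`. -/
def scaleHom (g : ℕ+ → R) : SymFn R →ₐ[R] SymFn R :=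
  aeval fun k : ℕ+ => (C (g k) * X k : SymFn R)

/-- The modified Macdonald polynomial `Q'_λ(x;q,t) = Q_λ(((1-q)/(1-t))·x; q,t)`,
the image of `Q_λ` under `p_k ↦ ((1-q^k)/(1-t^k))·p_k`. -/
def Qprime (q t : R) (P : Multiset ℕ+ → SymFn R) (lam : Multiset ℕ+) : SymFn R :=
  scaleHom (fun k => (1 - q ^ (k : ℕ)) / (1 - t ^ (k : ℕ))) (Qfam q t P lam)

/-! ### Plethysm -/

/-- Plethysm by the power sum on the left: `p_l ∘ f`, the ring endomorphism `p_k ↦ p_{lk}`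
applied to `f`. -/
def plethP (l : ℕ+) : SymFn R →ₐ[R] SymFn R :=
  aeval fun k : ℕ+ => (X (l * k) : SymFn R)

/-- General plethysm `g ∘ f`: the algebra homomorphism in `g` sending `p_k` to `p_k ∘ f`. -/
def pleth (g f : SymFn R) : SymFn R :=
  aeval (fun k : ℕ+ => plethP k f) g

/-! ### Cells of a partition: arms, legs, the constants `c_μ`, `c'_μ` and `n(μ)` -/

/-- Arm length of the (0-indexed) cell `(i,j)` of `λ`: `λ_i - j - 1`. -/
def armM (lam : Multiset ℕ+) (i j : ℕ) : ℕ := (descParts lam).getD i 0 - (j + 1)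

/-- Leg length of the (0-indexed) cell `(i,j)` of `λ`: the number of cells below it
in the same column. -/
def legM (lam : Multiset ℕ+) (i j : ℕ) : ℕ :=
  ((List.range (descParts lam).length).filter
    (fun i' => decide (i < i') && decide (j < (descParts lam).getD i' 0))).length

/-- Product of a quantity over all cells of the partition `λ`. -/
def cellProd {S : Type} [CommMonoid S] (lam : Multiset ℕ+) (f : ℕ → ℕ → S) : S :=
  ∏ i ∈ Finset.range (descParts lam).length,
    ∏ j ∈ Finset.range ((descParts lam).getD i 0), f i j

/-- `c_μ(q,t) = ∏_{s∈μ} (1 - q^{a(s)} t^{l(s)+1})`. -/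
def cLow (q t : R) (lam : Multiset ℕ+) : R :=
  cellProd lam fun i j => 1 - q ^ (armM lam i j) * t ^ (legM lam i j + 1)

/-- `c'_μ(q,t) = ∏_{s∈μ} (1 - q^{a(s)+1} t^{l(s)})`. -/
def cUp (q t : R) (lam : Multiset ℕ+) : R :=
  cellProd lam fun i j => 1 - q ^ (armM lam i j + 1) * t ^ (legM lam i j)

/-- `n(λ) = ∑ (i-1)·λ_i`. -/
def nInv (lam : Multiset ℕ+) : ℕ :=
  ∑ i ∈ Finset.range (descParts lam).length, i * (descParts lam).getD i 0

/-- The modified Macdonald polynomial of Haglund–Haiman–Loehr,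
`H̃_μ(x;q,t) = t^{n(μ)} J_μ(x/(1-t⁻¹); q, t⁻¹)`, where `J_μ(x;q,t) = c_μ(q,t) P_μ(x;q,t)`
and `Pinv` is the Macdonald basis at parameters `(q, t⁻¹)`. -/
def Htilde (q t : R) (Pinv : Multiset ℕ+ → SymFn R) (lam : Multiset ℕ+) : SymFn R :=
  C (t ^ nInv lam) *
    scaleHom (fun k => (1 - (t⁻¹) ^ (k : ℕ))⁻¹) (C (cLow q t⁻¹ lam) * Pinv lam)

/-! ### Cyclic characters -/

/-- The Ramanujan (Von Sterneck) sum `c(j,d)`: the sum of the `j`-th powers of the primitive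
`d`-th roots of unity (computed in the domain `R`). -/
def cRam [IsDomain R] (j d : ℕ) : R := ∑ z ∈ primitiveRoots d R, z ^ j

/-- The Frobenius characteristic `l_k^{(j)} = (1/k) ∑_{d ∣ k} c(j,d) p_d^{k/d}` of the
representation of `S_k` induced from the `j`-th character of the cyclic subgroup generated
by a `k`-cycle. -/
def lchar [IsDomain R] (k j : ℕ) : SymFn R :=
  ((k : R))⁻¹ • ∑ d ∈ Nat.divisors k, (cRam (R := R) j d) • ((pN (R := R) d) ^ (k / d))

end Core

/-! ### Specialization `t = ζ` and evaluation maps -/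

/-- Evaluation of a rational function in `t` over `ℂ(q)` at a point `c : ℂ(q)`. -/
def evalT (c : KK) (x : FF) : KK := RatFunc.eval (RingHom.id KK) c x

/-- Coefficientwise specialization `t = c` of a symmetric function over `ℂ(q,t)`. -/
def specT (c : KK) (f : SymFn FF) : SymFn KK :=
  ∑ m ∈ f.support, MvPolynomial.monomial m (evalT c (MvPolynomial.coeff m f))

/-- Evaluation `f ↦ f(1, ζ, ζ², …, ζ^{l-1}; q, ζ)`: substitute the finite alphabet
`x_i = ζ^{i-1}` (`1 ≤ i ≤ l`) and then specialize `t = ζ`. -/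
def macEvalRoots (l : ℕ) (z : ℂ) (f : SymFn FF) : KK :=
  evalT (RatFunc.C z)
    ((aeval fun k : ℕ+ =>
        ∑ i ∈ Finset.range l, (RatFunc.C (RatFunc.C z) : FF) ^ (i * (k : ℕ))) f)

/-- Evaluation of a symmetric function over `ℂ(q,t)` at the finite alphabet
`(1, t, t², …, t^{l-1})`. -/
def evalAlphT (l : ℕ) : SymFn FF →ₐ[FF] FF :=
  aeval fun k : ℕ+ => ∑ i ∈ Finset.range l, tF ^ (i * (k : ℕ))

/-- Congruence to `0` modulo the cyclotomic polynomial `Φ_l(t)` for a rational function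
in `t`: `x = Φ_l(t) · (a/b)` with `b` coprime to `Φ_l`. -/
def CongrModPhi (l : ℕ) (x : FF) : Prop :=
  ∃ a b : Polynomial KK, IsCoprime b (Polynomial.cyclotomic l KK) ∧
    x = algebraMap (Polynomial KK) FF (Polynomial.cyclotomic l KK) *
      (algebraMap (Polynomial KK) FF a / algebraMap (Polynomial KK) FF b)

/-- The finite set of all partitions of `n`, as multisets of positive integers. -/
def partitionsOf (n : ℕ) : Finset (Multiset ℕ+) :=
  Finset.univ.image fun pi : Nat.Partition n =>
    pi.parts.attach.map fun a => (⟨a.1, pi.parts_pos a.2⟩ : ℕ+)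

end MacdonaldPreliminaries

noncomputable section

open MvPolynomial

/-!
The function `Q'_{(r^l)}` lies in the span of the products `h_κ` with at most `l` parts, and is
determined there by its pairings with the `h_κ` for the deformed inner product, in which the norm
of `p_k` is scaled by `(1 - t^k) / (1 - q^k)`: up to a common factor, these are the coefficients
of `(x_1 ⋯ x_l)^r`.

Since `∏_{j<d} H(ζ^j u) = ∑ n, (p_d ∘ h_n) u^{dn}` for `H(u) = ∑ n, h_n u^n`, replacing each block
`h_k^d` of `h_κ` by `p_d ∘ h_k` gives another basis of the span, whose transition matrix is
triangular with diagonal entries `±1`. It contains the expected answer, and the coefficients of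
`Q'_{(r^l)}` in this basis solve a linear system whose matrix is the Gram matrix of the deformed
form. If `κ` has `e` blocks, then row `κ` of the Gram matrix is divisible by `(1 - t^d)^e`. The
quotient matrix is still invertible at `t = ζ`: after specializing `q` to `ζ` as well, it becomes
rational, block triangular with respect to `e`, and its diagonal blocks are Gram matrices of the
positive definite Hall form. Hence the coefficients are regular at `t = ζ`, and all of them vanish
there except the one of `(p_d ∘ h_r)^{l/d}`.
-/

/-! ### Partitions by multiplicities -/

/-- Exponent vectors of the monomials in the power sums: `m : PartExp` encodes the partition
with `m k` parts equal to `k`. -/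
abbrev PartExp : Type := ℕ+ →₀ ℕ

/-- The sum `∑ k · m k` of the parts. -/
def partSize : PartExp →+ ℕ := Finsupp.weight (fun k : ℕ+ => (k : ℕ))

/-- The number `∑ m k` of parts. -/
def partLength : PartExp →+ ℕ := Finsupp.weight (fun _ : ℕ+ => 1)

/-- The sum `∑ k² · m k` of the squares of the parts. It refines the dominance order, which makes
it a convenient rank function for triangularity arguments. -/
def partSumSq : PartExp →+ ℕ := Finsupp.weight (fun k : ℕ+ => (k : ℕ) ^ 2)

/-- The number of parts divisible by `d`. -/
def partNumDvd (d : ℕ) : PartExp →+ ℕ :=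
  Finsupp.weight (fun k : ℕ+ => if d ∣ (k : ℕ) then 1 else 0)

theorem partSize_single (k : ℕ+) (e : ℕ) : partSize (Finsupp.single k e) = e * k := by
  simp [partSize, Finsupp.weight_single]

theorem partLength_single (k : ℕ+) (e : ℕ) : partLength (Finsupp.single k e) = e := by
  simp [partLength, Finsupp.weight_single]

theorem partSumSq_single (k : ℕ+) (e : ℕ) :
    partSumSq (Finsupp.single k e) = e * (k : ℕ) ^ 2 := by
  simp [partSumSq, Finsupp.weight_single]

theorem partNumDvd_single (d : ℕ) (k : ℕ+) (e : ℕ) :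
    partNumDvd d (Finsupp.single k e) = if d ∣ (k : ℕ) then e else 0 := by
  simp [partNumDvd, Finsupp.weight_single]

/-! ### Diagonal bilinear forms in the power sum basis -/

section DiagForm

variable {R : Type} [Field R]

/-- The bilinear form for which the power sum monomials are orthogonal and the monomial with
exponent `m` has norm `w m`. -/
def diagForm (w : PartExp → R) : SymFn R →ₗ[R] SymFn R →ₗ[R] R :=
  (basisMonomials ℕ+ R).constr R fun m => w m • lcoeff R m

theorem diagForm_monomial_left (w : PartExp → R) (m : PartExp) (a : R) (g : SymFn R) :
    diagForm w (monomial m a) g = a * coeff m g * w m := by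
  have h : (monomial m a : SymFn R) = a • basisMonomials ℕ+ R m := by
    simp [coe_basisMonomials, smul_monomial]
  rw [h, map_smul, diagForm, Module.Basis.constr_basis]
  simp only [LinearMap.smul_apply, lcoeff_apply, smul_eq_mul]
  ring

theorem diagForm_eq_sum (w : PartExp → R) (f g : SymFn R) :
    diagForm w f g = ∑ m ∈ f.support, coeff m f * coeff m g * w m := by
  conv_lhs => rw [← support_sum_monomial_coeff f]
  simp only [map_sum, LinearMap.sum_apply, diagForm_monomial_left]

theorem diagForm_comm (w : PartExp → R) (f g : SymFn R) : diagForm w f g = diagForm w g f := by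
  have h : diagForm w = (diagForm w).flip := by
    refine (basisMonomials ℕ+ R).ext fun m => (basisMonomials ℕ+ R).ext fun n => ?_
    by_cases hmn : m = n
    · simp [hmn]
    · simp [diagForm_monomial_left, coeff_monomial, hmn, Ne.symm hmn]
  exact congrArg (fun b => b f g) h

theorem diagForm_monomial_right (w : PartExp → R) (m : PartExp) (a : R) (g : SymFn R) :
    diagForm w g (monomial m a) = a * coeff m g * w m := by
  rw [diagForm_comm, diagForm_monomial_left]

theorem innerQT_eq_diagForm (q t : R) (f g : SymFn R) :
    innerQT q t f g = diagForm (zwtQT q t) f g :=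
  (diagForm_eq_sum _ f g).symm

/-- The Hall inner product as a bilinear map. -/
def hallForm : SymFn R →ₗ[R] SymFn R →ₗ[R] R := diagForm (zwtH (R := R))

theorem coeff_scaleHom (g : ℕ+ → R) (m : PartExp) (f : SymFn R) :
    coeff m (scaleHom g f) = (m.prod fun k e => g k ^ e) * coeff m f := by
  classical
  induction f using MvPolynomial.induction_on' with
  | add p q hp hq => simp [hp, hq, mul_add]
  | monomial u a =>
    have h : scaleHom g (monomial u a) = monomial u (a * u.prod fun k e => g k ^ e) := by
      rw [scaleHom, aeval_monomial, MvPolynomial.algebraMap_eq, monomial_eq (s := u), C_mul]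
      simp only [mul_pow, Finsupp.prod, Finset.prod_mul_distrib, map_prod, map_pow, mul_assoc]
    rw [h, coeff_monomial, coeff_monomial]
    split_ifs with hu
    · rw [hu, mul_comm]
    · rw [mul_zero]

theorem zwtH_add_single (m : PartExp) (k : ℕ+) :
    zwtH (R := R) (m + Finsupp.single k 1) = zwtH (R := R) m * ((m k : R) + 1) * (k : ℕ) := by
  classical
  have zwtH_eq (n : PartExp) : zwtH (R := R) n = ((n k).factorial * ((k : ℕ) : R) ^ n k) *
      (n.erase k).prod fun i e => (e.factorial : R) * ((i : ℕ) : R) ^ e :=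
    (n.mul_prod_erase' k (fun i e => (e.factorial : R) * ((i : ℕ) : R) ^ e) (by simp)).symm
  rw [zwtH_eq, zwtH_eq m]
  simp only [Finsupp.erase_add, Finsupp.erase_single, add_zero, Finsupp.add_apply,
    Finsupp.single_eq_same, Nat.factorial_succ, pow_succ]
  push_cast
  ring

theorem zwtH_ne_zero [CharZero R] (m : PartExp) : zwtH (R := R) m ≠ 0 :=
  Finset.prod_ne_zero_iff.mpr fun k _ => mul_ne_zero
    (Nat.cast_ne_zero.mpr (m k).factorial_ne_zero) (pow_ne_zero _ (Nat.cast_ne_zero.mpr k.ne_zero))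

end DiagForm

/-! ### Power series with a prescribed logarithmic derivative -/

section LogDeriv

variable {S : Type*} [CommRing S]

/-- `Y` has constant coefficient `1` and logarithmic derivative `A`. Coefficientwise this is a
Newton recursion, such as the one defining `hsym`; see `hasLogDeriv_mk_iff`. -/
def HasLogDeriv (Y A : PowerSeries S) : Prop :=
  PowerSeries.constantCoeff Y = 1 ∧ PowerSeries.derivative S Y = A * Y

theorem HasLogDeriv.mul {A B Y Z : PowerSeries S} (hY : HasLogDeriv Y A) (hZ : HasLogDeriv Z B) :
    HasLogDeriv (Y * Z) (A + B) := by
  refine ⟨by simp [hY.1, hZ.1], ?_⟩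
  rw [Derivation.leibniz, hY.2, hZ.2, smul_eq_mul, smul_eq_mul]
  ring

theorem HasLogDeriv.prod {ι : Type*} (s : Finset ι) {A Y : ι → PowerSeries S}
    (h : ∀ i ∈ s, HasLogDeriv (Y i) (A i)) : HasLogDeriv (∏ i ∈ s, Y i) (∑ i ∈ s, A i) := by
  classical
  induction s using Finset.induction_on with
  | empty => exact ⟨by simp, by simp⟩
  | insert a s ha ih =>
    rw [Finset.sum_insert ha, Finset.prod_insert ha]
    exact (h a (by simp)).mul (ih fun i hi => h i (by simp [hi]))

theorem hasLogDeriv_mk_iff {y a : ℕ → S} : HasLogDeriv (PowerSeries.mk y) (PowerSeries.mk a) ↔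
    y 0 = 1 ∧ ∀ n, y (n + 1) * (n + 1) = ∑ i ∈ Finset.range (n + 1), a i * y (n - i) := by
  refine and_congr (by simp [← PowerSeries.coeff_zero_eq_constantCoeff_apply]) ?_
  rw [PowerSeries.ext_iff]
  refine forall_congr' fun n => ?_
  rw [PowerSeries.coeff_derivative, PowerSeries.coeff_mul,
    Finset.Nat.sum_antidiagonal_eq_sum_range_succ_mk]
  simp

theorem HasLogDeriv.unique [IsDomain S] [CharZero S] {A Y Z : PowerSeries S}
    (hY : HasLogDeriv Y A) (hZ : HasLogDeriv Z A) : Y = Z := by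
  obtain ⟨y, rfl⟩ : ∃ y, Y = PowerSeries.mk y := ⟨fun n => PowerSeries.coeff n Y, by ext; simp⟩
  obtain ⟨z, rfl⟩ : ∃ z, Z = PowerSeries.mk z := ⟨fun n => PowerSeries.coeff n Z, by ext; simp⟩
  obtain ⟨a, rfl⟩ : ∃ a, A = PowerSeries.mk a := ⟨fun n => PowerSeries.coeff n A, by ext; simp⟩
  rw [hasLogDeriv_mk_iff] at hY hZ
  congr 1
  funext n
  induction n using Nat.strong_induction_on with
  | _ n ih =>
    rcases n with _ | n
    · rw [hY.1, hZ.1]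
    · apply mul_right_cancel₀ (Nat.cast_add_one_ne_zero n : (n : S) + 1 ≠ 0)
      rw [hY.2, hZ.2]
      exact Finset.sum_congr rfl fun i _ => by rw [ih (n - i) (by omega)]

theorem HasLogDeriv.map {T : Type*} [CommRing T] (φ : S →+* T) {y a : ℕ → S}
    (h : HasLogDeriv (PowerSeries.mk y) (PowerSeries.mk a)) :
    HasLogDeriv (PowerSeries.mk fun n => φ (y n)) (PowerSeries.mk fun n => φ (a n)) := by
  rw [hasLogDeriv_mk_iff] at h ⊢
  refine ⟨by simp [h.1], fun n => ?_⟩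
  simpa using congrArg φ (h.2 n)

theorem hasLogDeriv_geom (u : S) :
    HasLogDeriv (PowerSeries.mk fun n => u ^ n) (PowerSeries.mk fun n => u ^ (n + 1)) := by
  rw [hasLogDeriv_mk_iff]
  refine ⟨pow_zero u, fun n => ?_⟩
  have h : ∀ i ∈ Finset.range (n + 1), u ^ (i + 1) * u ^ (n - i) = u ^ (n + 1) := fun i hi => by
    rw [← pow_add, show i + 1 + (n - i) = n + 1 by grind]
  rw [Finset.sum_congr rfl h, Finset.sum_const, Finset.card_range, nsmul_eq_mul, mul_comm]
  push_cast
  rfl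

theorem HasLogDeriv.rescale (z : S) {y a : ℕ → S}
    (h : HasLogDeriv (PowerSeries.mk y) (PowerSeries.mk a)) :
    HasLogDeriv (PowerSeries.mk fun n => z ^ n * y n)
      (PowerSeries.mk fun n => z ^ (n + 1) * a n) := by
  rw [hasLogDeriv_mk_iff] at h ⊢
  refine ⟨by simp [h.1], fun n => ?_⟩
  rw [mul_assoc, h.2, Finset.mul_sum]
  refine Finset.sum_congr rfl fun i hi => ?_
  rw [show n + 1 = (i + 1) + (n - i) by grind, pow_add]
  ring

end LogDeriv

/-! ### Complete homogeneous symmetric functions and Hall adjoints of power sums -/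

theorem derivation_prod {R A : Type*} [CommSemiring R] [CommRing A] [Algebra R A]
    (D : Derivation R A A) {ι : Type*} [DecidableEq ι] (s : Finset ι) (f : ι → A) :
    D (∏ i ∈ s, f i) = ∑ i ∈ s, (∏ j ∈ s.erase i, f j) * D (f i) := by
  induction s using Finset.induction_on with
  | empty => simp
  | insert a s ha ih =>
    rw [Finset.prod_insert ha, Derivation.leibniz, ih, Finset.sum_insert ha,
      Finset.erase_insert ha, smul_eq_mul, smul_eq_mul, Finset.mul_sum, add_comm]
    congr 1
    refine Finset.sum_congr rfl fun i hi => ?_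
    rw [Finset.erase_insert_of_ne (ne_of_mem_of_not_mem hi ha).symm,
      Finset.prod_insert (by simp [ha]), mul_assoc]

section Hsym

variable {R : Type} [Field R]

/-- The derivation `p_k^⊥ = k ∂/∂p_k`, adjoint to multiplication by `p_k` for the Hall inner
product. -/
def psumPerp (k : ℕ+) : Derivation R (SymFn R) (SymFn R) := ((k : ℕ) : R) • pderiv k

theorem psumPerp_X (k i : ℕ+) :
    psumPerp k (X i : SymFn R) = if i = k then ((k : ℕ) : SymFn R) else 0 := by
  classical
  rw [psumPerp, Derivation.smul_apply, pderiv_X]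
  by_cases h : i = k
  · subst h; simp [smul_eq_C_mul]
  · simp [h]

theorem hallForm_mul_X (k : ℕ+) (g f : SymFn R) :
    hallForm g (f * X k) = hallForm (psumPerp k g) f := by
  classical
  induction g using MvPolynomial.induction_on' with
  | add p q hp hq => simp only [map_add, LinearMap.add_apply, hp, hq]
  | monomial m a =>
    rw [psumPerp, Derivation.smul_apply, pderiv_monomial, map_smul, LinearMap.smul_apply, hallForm,
      diagForm_monomial_left, diagForm_monomial_left, coeff_mul_X']
    by_cases hk : k ∈ m.support
    · obtain ⟨n, rfl⟩ : ∃ n, m = n + Finsupp.single k 1 :=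
        ⟨m - Finsupp.single k 1, (tsub_add_cancel_of_le (by simpa [Nat.one_le_iff_ne_zero]
          using hk)).symm⟩
      rw [if_pos hk, add_tsub_cancel_right, zwtH_add_single, Finsupp.add_apply,
        Finsupp.single_eq_same, smul_eq_mul]
      push_cast
      ring
    · rw [if_neg hk, Finsupp.notMem_support_iff.mp hk]
      simp

theorem hsym_zero : hsym (R := R) 0 = 1 := by rw [hsym]

theorem hInt_natCast (n : ℕ) : hInt (R := R) n = hsym n := by simp [hInt]

theorem hInt_zero : hInt (R := R) 0 = 1 := by simp [hInt, hsym_zero]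

theorem hInt_of_neg {z : ℤ} (hz : z < 0) : hInt (R := R) z = 0 := if_neg (by omega)

/-- The evaluation `f ↦ f(x₁, …, x_l)`. -/
def evalVars (l : ℕ) : SymFn R →ₐ[R] MvPolynomial (Fin l) R :=
  aeval fun k : ℕ+ => ∑ i, (X i : MvPolynomial (Fin l) R) ^ (k : ℕ)

variable [CharZero R]

theorem hasLogDeriv_hsym :
    HasLogDeriv (PowerSeries.mk (hsym (R := R))) (PowerSeries.mk fun n => X n.succPNat) := by
  refine hasLogDeriv_mk_iff.mpr ⟨hsym_zero, fun n => ?_⟩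
  have hn : (n : R) + 1 ≠ 0 := Nat.cast_add_one_ne_zero n
  rw [hsym, show (n : SymFn R) + 1 = C ((n : R) + 1) by simp, mul_comm, ← smul_eq_C_mul,
    smul_smul, mul_inv_cancel₀ hn, one_smul]
  rfl

theorem map_hsym {R' : Type} [Field R'] [CharZero R'] (φ : R →+* R') (n : ℕ) :
    MvPolynomial.map φ (hsym (R := R) n) = hsym (R := R') n := by
  have h := (hasLogDeriv_hsym (R := R)).map (MvPolynomial.map φ)
  simp only [map_X] at h
  simpa using congrArg (PowerSeries.coeff n) (h.unique hasLogDeriv_hsym)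

/-- The range of summation may be enlarged at will because `hInt` vanishes at negative
arguments. -/
theorem hInt_newton {z : ℤ} {N : ℕ} (hz : z ≤ N) : (z : SymFn R) * hInt z =
    ∑ i ∈ Finset.range N, X i.succPNat * hInt (R := R) (z - (i + 1)) := by
  rcases lt_or_ge 0 z with hz' | hz'
  · obtain ⟨n, rfl⟩ : ∃ n : ℕ, z = (n + 1 : ℕ) := ⟨(z - 1).toNat, by omega⟩
    have h := (hasLogDeriv_mk_iff.mp (hasLogDeriv_hsym (R := R))).2 n
    rw [hInt_natCast, mul_comm, Int.cast_natCast, Nat.cast_succ, h]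
    refine Finset.sum_congr_of_eq_on_inter (fun i _ hi => absurd (Finset.mem_range.mpr ?_) hi)
      (fun i _ hi => ?_) (fun i hi _ => ?_)
    · grind
    · rw [hInt_of_neg (by grind), mul_zero]
    · rw [← hInt_natCast, show ((n + 1 : ℕ) : ℤ) - (i + 1) = ((n - i : ℕ) : ℤ) by grind]
  · have h0 : (z : SymFn R) * hInt z = 0 := by
      rcases hz'.lt_or_eq with h | rfl
      · rw [hInt_of_neg h, mul_zero]
      · rw [Int.cast_zero, zero_mul]
    rw [h0, Finset.sum_eq_zero fun i _ => by rw [hInt_of_neg (by omega), mul_zero]]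

theorem psumPerp_hInt (k : ℕ+) (z : ℤ) : psumPerp k (hInt (R := R) z) = hInt (z - k) := by
  have hk := k.pos
  induction h : z.toNat using Nat.strong_induction_on generalizing z with
  | _ n ih =>
    rcases lt_trichotomy z 0 with hz | rfl | hz
    · rw [hInt_of_neg hz, hInt_of_neg (by omega), map_zero]
    · rw [hInt_zero, Derivation.map_one_eq_zero, hInt_of_neg (by omega)]
    have hz0 : ((z : ℤ) : SymFn R) ≠ 0 := by exact_mod_cast hz.ne'
    have hsum : ∀ i ∈ Finset.range (z.toNat + k),
        psumPerp k (X i.succPNat * hInt (R := R) (z - (i + 1))) =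
          (if i = k - 1 then ((k : ℕ) : SymFn R) * hInt (z - k) else 0) +
            X i.succPNat * hInt (z - k - (i + 1)) := fun i _ => by
      have hik : i.succPNat = k ↔ i = k - 1 := by
        rw [← PNat.coe_inj, Nat.succPNat_coe]; omega
      rw [Derivation.leibniz, ih _ (by omega) _ rfl, psumPerp_X, smul_eq_mul, smul_eq_mul, add_comm,
        sub_right_comm]
      simp only [hik]
      split_ifs with hi
      · rw [mul_comm, show z - ((i : ℤ) + 1) = z - k by omega]
      · rw [mul_zero]
    apply mul_left_cancel₀ hz0
    calc (z : SymFn R) * psumPerp k (hInt (R := R) z)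
        = psumPerp k ((z : SymFn R) * hInt z) := by
          rw [← zsmul_eq_mul, ← zsmul_eq_mul, map_zsmul]
      _ = ((k : ℕ) : SymFn R) * hInt (z - k) + ((z - k : ℤ) : SymFn R) * hInt (z - k) := by
          rw [hInt_newton (N := z.toNat + k) (by omega), map_sum, Finset.sum_congr rfl hsum,
            Finset.sum_add_distrib, ← hInt_newton (by omega), Finset.sum_ite_eq',
            if_pos (Finset.mem_range.mpr (by omega))]
      _ = (z : SymFn R) * hInt (z - k) := by push_cast; ring

theorem constantCoeff_hsym (n : ℕ) :
    constantCoeff (hsym (R := R) n) = if n = 0 then 1 else 0 := by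
  rcases n with _ | n
  · simp [hsym_zero]
  · have h := congrArg constantCoeff (hInt_newton (R := R) (z := (n + 1 : ℕ)) le_rfl)
    rw [hInt_natCast] at h
    simpa [Nat.cast_add_one_ne_zero] using h

theorem psumPerp_prod_hsym {l : ℕ} (k : ℕ+) (α : Fin l →₀ ℕ) :
    psumPerp k (∏ i, hsym (R := R) (α i)) =
      ∑ i, if (k : ℕ) ≤ α i then
        ∏ j, hsym ((α - Finsupp.single i (k : ℕ) : Fin l →₀ ℕ) j) else 0 := by
  classical
  rw [derivation_prod]
  refine Finset.sum_congr rfl fun i _ => ?_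
  rw [← hInt_natCast (α i), psumPerp_hInt]
  split_ifs with h
  · rw [← Finset.mul_prod_erase _ _ (Finset.mem_univ i), mul_comm, ← Nat.cast_sub h, hInt_natCast]
    congr 1
    · simp
    · refine Finset.prod_congr rfl fun j hj => ?_
      simp [(Finset.ne_of_mem_erase hj).symm]
  · rw [hInt_of_neg (by omega), mul_zero]

/-- Both sides behave in the same way under multiplication of `f` by a power sum. -/
theorem hallForm_prod_hsym {l : ℕ} (f : SymFn R) (α : Fin l →₀ ℕ) :
    hallForm (∏ i, hsym (α i)) f = coeff α (evalVars l f) := by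
  classical
  induction f using MvPolynomial.induction_on generalizing α with
  | C a =>
    have hconst : coeff 0 (∏ i, hsym (R := R) (α i)) = if 0 = α then 1 else 0 := by
      rw [← constantCoeff_eq, map_prod]
      simp only [constantCoeff_hsym, Finset.prod_ite_zero, Finset.prod_const_one]
      simp [Finsupp.ext_iff, eq_comm]
    rw [← algebraMap_eq, AlgHom.commutes, algebraMap_eq, algebraMap_eq, coeff_C, C_apply, hallForm,
      diagForm_monomial_right, hconst]
    simp [zwtH]
  | add p q hp hq => simp [hp, hq]
  | mul_X p k hp =>
    have hX : evalVars l (X k : SymFn R) = ∑ i, monomial (Finsupp.single i (k : ℕ)) (1 : R) := by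
      simp [evalVars, X_pow_eq_monomial]
    rw [hallForm_mul_X, psumPerp_prod_hsym, map_sum, LinearMap.sum_apply, map_mul, hX,
      Finset.mul_sum, coeff_sum]
    refine Finset.sum_congr rfl fun i _ => ?_
    simp only [coeff_mul_monomial', Finsupp.single_le_iff]
    split_ifs
    · rw [hp, mul_one]
    · simp

end Hsym

/-! ### Exponent vectors of sequences and of multisets -/

/-- The partition with the single part `k`, or the empty partition if `k = 0`. -/
def onePart (k : ℕ) : PartExp := if h : 0 < k then Finsupp.single ⟨k, h⟩ 1 else 0

theorem onePart_zero : onePart 0 = 0 := rfl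

theorem onePart_coe (k : ℕ+) : onePart k = Finsupp.single k 1 := dif_pos k.pos

theorem eq_zero_or_exists_pnat (k : ℕ) : k = 0 ∨ ∃ k' : ℕ+, (k' : ℕ) = k :=
  k.eq_zero_or_pos.imp_right fun h => ⟨⟨k, h⟩, rfl⟩

theorem partSize_onePart (k : ℕ) : partSize (onePart k) = k := by
  obtain rfl | ⟨k, rfl⟩ := eq_zero_or_exists_pnat k
  · rw [onePart_zero, map_zero]
  · rw [onePart_coe, partSize_single, one_mul]

theorem partLength_onePart_le (k : ℕ) : partLength (onePart k) ≤ 1 := by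
  obtain rfl | ⟨k, rfl⟩ := eq_zero_or_exists_pnat k
  · rw [onePart_zero, map_zero]; exact zero_le_one
  · rw [onePart_coe, partLength_single]

theorem partSumSq_onePart (k : ℕ) : partSumSq (onePart k) = k ^ 2 := by
  obtain rfl | ⟨k, rfl⟩ := eq_zero_or_exists_pnat k
  · rw [onePart_zero, map_zero]; rfl
  · rw [onePart_coe, partSumSq_single, one_mul]

/-- The partition whose parts are the nonzero terms of `α`. -/
def partsOf {ι : Type*} [Fintype ι] (α : ι → ℕ) : PartExp := ∑ i, onePart (α i)

section PartsOf

variable {ι : Type*} [Fintype ι] (α : ι → ℕ)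

theorem partSize_partsOf : partSize (partsOf α) = ∑ i, α i := by
  simp [partsOf, partSize_onePart]

theorem partSumSq_partsOf : partSumSq (partsOf α) = ∑ i, α i ^ 2 := by
  simp [partsOf, partSumSq_onePart]

theorem partLength_partsOf_le : partLength (partsOf α) ≤ Fintype.card ι := by
  rw [partsOf, map_sum, Fintype.card_eq_sum_ones]
  exact Finset.sum_le_sum fun i _ => partLength_onePart_le _

theorem partsOf_const (r : ℕ+) :
    partsOf (fun _ : ι => (r : ℕ)) = Finsupp.single r (Fintype.card ι) := by
  simp [partsOf, onePart_coe]

end PartsOf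

theorem sum_getD_eq_sum_map {A : Type*} [AddCommMonoid A] {g : ℕ → A} (g0 : g 0 = 0) (L : List ℕ)
    {l : ℕ} (hl : L.length ≤ l) : ∑ i : Fin l, g (L.getD i 0) = (L.map g).sum := by
  induction L generalizing l with
  | nil => simp [g0]
  | cons a L ih =>
    rcases l with _ | l
    · simp at hl
    · rw [Fin.sum_univ_succ]
      simp [← ih (Nat.le_of_succ_le_succ hl)]

theorem length_descParts (nu : Multiset ℕ+) : (descParts nu).length = Multiset.card nu := by
  simp [descParts]

theorem coe_descParts (nu : Multiset ℕ+) :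
    (descParts nu : Multiset ℕ) = nu.map fun a : ℕ+ => (a : ℕ) := by
  rw [descParts, Multiset.coe_reverse, Multiset.sort_eq]

theorem toFinsupp_eq_sum_onePart (nu : Multiset ℕ+) :
    Multiset.toFinsupp nu = (nu.map fun a : ℕ+ => onePart a).sum := by
  induction nu using Multiset.induction_on with
  | empty => simp
  | cons a s ih =>
    rw [Multiset.map_cons, Multiset.sum_cons, ← ih, ← Multiset.singleton_add, map_add,
      Multiset.toFinsupp_singleton, onePart_coe]

theorem toFinsupp_eq_partsOf (nu : Multiset ℕ+) {l : ℕ} (hl : Multiset.card nu ≤ l) :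
    Multiset.toFinsupp nu = partsOf fun i : Fin l => (descParts nu).getD i 0 := by
  rw [toFinsupp_eq_sum_onePart, partsOf, sum_getD_eq_sum_map onePart_zero _
    (by rwa [length_descParts]), ← Multiset.sum_coe, ← Multiset.map_coe, coe_descParts,
    Multiset.map_map]
  rfl

theorem partLength_toFinsupp (nu : Multiset ℕ+) :
    partLength (Multiset.toFinsupp nu) = Multiset.card nu := by
  rw [toFinsupp_eq_sum_onePart, map_multiset_sum, Multiset.map_map]
  simp [onePart_coe, partLength_single]

theorem partSize_toFinsupp (nu : Multiset ℕ+) : partSize (Multiset.toFinsupp nu) = wt nu := by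
  rw [toFinsupp_eq_sum_onePart, map_multiset_sum, Multiset.map_map]
  simp [partSize_onePart, wt]

theorem exists_eq_partsOf {m : PartExp} {l : ℕ} (h : partLength m ≤ l) :
    ∃ α : Fin l → ℕ, m = partsOf α := by
  refine ⟨_, (Finsupp.toMultiset_toFinsupp m).symm.trans (toFinsupp_eq_partsOf _ ?_)⟩
  rwa [← partLength_toFinsupp, Finsupp.toMultiset_toFinsupp]

/-- The product `h_m = ∏ h_k ^ m k`. -/
def hMon {R : Type} [Field R] (m : PartExp) : SymFn R := m.prod fun k e => hsym (k : ℕ) ^ e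

section HMon

variable {R : Type} [Field R]

theorem hMon_zero : hMon (R := R) 0 = 1 := Finsupp.prod_zero_index

theorem hMon_add (a b : PartExp) : hMon (R := R) (a + b) = hMon a * hMon b :=
  Finsupp.prod_add_index' (fun _ => pow_zero _) fun _ => pow_add _

theorem hMon_single (k : ℕ+) (e : ℕ) :
    hMon (R := R) (Finsupp.single k e) = hsym (k : ℕ) ^ e :=
  Finsupp.prod_single_index (pow_zero _)

theorem hMon_onePart (k : ℕ) : hMon (R := R) (onePart k) = hsym k := by
  obtain rfl | ⟨k, rfl⟩ := eq_zero_or_exists_pnat k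
  · rw [onePart_zero, hMon_zero, hsym_zero]
  · rw [onePart_coe, hMon_single, pow_one]

theorem hMon_partsOf {ι : Type*} [Fintype ι] (α : ι → ℕ) :
    hMon (R := R) (partsOf α) = ∏ i, hsym (α i) := by
  simp only [partsOf, ← hMon_onePart]
  exact map_sum (⟨⟨hMon, hMon_zero⟩, hMon_add⟩ : PartExp →+ Additive (SymFn R)) _ _

theorem hallForm_hMon_partsOf [CharZero R] {l : ℕ} (f : SymFn R) (α : Fin l → ℕ) :
    hallForm (hMon (partsOf α)) f = coeff (Finsupp.equivFunOnFinite.symm α) (evalVars l f) := by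
  rw [← hallForm_prod_hsym, hMon_partsOf]
  rfl

end HMon

/-! ### Schur functions in few variables -/

section ElemPoly

variable {R : Type} [Field R] {l : ℕ}

/-- The polynomial `∏_{i ∈ s} (1 - x_i u)` in the variable `u`, whose coefficients are the signed
elementary symmetric polynomials in the variables indexed by `s`. -/
def elemPoly (R : Type) [Field R] (s : Finset (Fin l)) : Polynomial (MvPolynomial (Fin l) R) :=
  ∏ i ∈ s, (1 - Polynomial.C (X i) * Polynomial.X)

theorem natDegree_elemPoly_le (s : Finset (Fin l)) : (elemPoly R s).natDegree ≤ s.card := by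
  refine (Polynomial.natDegree_prod_le _ _).trans ?_
  rw [Finset.card_eq_sum_ones]
  refine Finset.sum_le_sum fun i _ => ?_
  compute_degree

theorem coeff_zero_elemPoly (s : Finset (Fin l)) : (elemPoly R s).coeff 0 = 1 := by
  simp [elemPoly, Polynomial.coeff_zero_prod]

theorem one_sub_C_mul_X_mul_geom {S : Type*} [CommRing S] (u : S) :
    (1 - PowerSeries.C u * PowerSeries.X) * (PowerSeries.mk fun n => u ^ n) = 1 := by
  ext n
  rcases n with _ | n
  · simp [sub_mul, mul_assoc]
  · rw [sub_mul, one_mul, map_sub, mul_assoc, PowerSeries.coeff_C_mul,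
      PowerSeries.coeff_succ_X_mul]
    simp [PowerSeries.coeff_one, pow_succ']

variable [CharZero R]

theorem mk_evalVars_hsym : (PowerSeries.mk fun n => evalVars (R := R) l (hsym n)) =
    ∏ i : Fin l, PowerSeries.mk fun n => (X i : MvPolynomial (Fin l) R) ^ n := by
  refine ((hasLogDeriv_hsym (R := R)).map (evalVars l).toRingHom).unique ?_
  convert HasLogDeriv.prod Finset.univ fun (i : Fin l) _ =>
    hasLogDeriv_geom (X i : MvPolynomial (Fin l) R) using 1
  ext1 n
  simp [evalVars]

theorem elemPoly_mul_mk_evalVars_hsym (s : Finset (Fin l)) :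
    (elemPoly R s : PowerSeries (MvPolynomial (Fin l) R)) *
      (PowerSeries.mk fun n => evalVars (R := R) l (hsym n)) =
    ∏ i ∈ sᶜ, PowerSeries.mk fun n => (X i : MvPolynomial (Fin l) R) ^ n := by
  have hs : (elemPoly R s : PowerSeries (MvPolynomial (Fin l) R)) =
      ∏ i ∈ s, (1 - PowerSeries.C (X i : MvPolynomial (Fin l) R) * PowerSeries.X) := by
    rw [elemPoly, ← Polynomial.coeToPowerSeries.ringHom_apply, map_prod]
    simp
  rw [mk_evalVars_hsym, ← Finset.prod_mul_prod_compl s, ← mul_assoc, hs,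
    ← Finset.prod_mul_distrib, Finset.prod_eq_one fun i _ => one_sub_C_mul_X_mul_geom _, one_mul]

end ElemPoly

theorem sum_coeff_mul_eq_coeff_mul {S : Type*} [CommRing S] {H : ℤ → S} (hH : ∀ z < 0, H z = 0)
    (p : Polynomial S) {k : ℕ} (hp : p.natDegree < k) (N : ℕ) :
    ∑ j : Fin k, H ((N : ℤ) - (k - 1 - j : ℕ)) * p.coeff (k - 1 - j) =
      PowerSeries.coeff N ((p : PowerSeries S) * PowerSeries.mk fun n => H n) := by
  rw [PowerSeries.coeff_mul, Finset.Nat.sum_antidiagonal_eq_sum_range_succ_mk,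
    Fin.sum_univ_eq_sum_range (fun j => H ((N : ℤ) - (k - 1 - j : ℕ)) * p.coeff (k - 1 - j)),
    Finset.sum_range_reflect (fun j => H ((N : ℤ) - j) * p.coeff j)]
  refine Finset.sum_congr_of_eq_on_inter (fun j _ hj => ?_) (fun j _ hj => ?_) (fun j _ hj => ?_)
  · rw [hH _ (by grind), zero_mul]
  · rw [Polynomial.coeff_coe, Polynomial.coeff_eq_zero_of_natDegree_lt (by grind), zero_mul]
  · rw [mul_comm, Polynomial.coeff_coe, PowerSeries.coeff_mk, Nat.cast_sub (by grind)]

section EvalSchur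

variable {R : Type} [Field R]

theorem schur_eq_det (nu : Multiset ℕ+) {k : ℕ} (h : Multiset.card nu = k) :
    schur (R := R) nu = Matrix.det (Matrix.of fun i j : Fin k =>
      hInt (R := R) ((((descParts nu).getD i 0 : ℕ) : ℤ) + (j : ℤ) - (i : ℤ))) := by
  subst h; rfl

theorem getD_descParts_pos (nu : Multiset ℕ+) {i : ℕ} (hi : i < Multiset.card nu) :
    0 < (descParts nu).getD i 0 := by
  rw [← length_descParts] at hi
  rw [List.getD_eq_getElem _ _ hi]
  have h := List.getElem_mem hi
  rw [← Multiset.mem_coe, coe_descParts, Multiset.mem_map] at h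
  obtain ⟨a, _, ha⟩ := h
  exact ha ▸ a.pos

theorem descParts_replicate (l : ℕ) (r : ℕ+) :
    descParts (Multiset.replicate l r) = List.replicate l (r : ℕ) := by
  refine List.eq_replicate_iff.mpr ⟨by simp [length_descParts], fun b hb => ?_⟩
  rw [← Multiset.mem_coe, coe_descParts, Multiset.map_replicate] at hb
  exact Multiset.eq_of_mem_replicate hb

variable {l : ℕ}

/-- The Jacobi–Trudi matrix of the rectangle `(r^l)`, evaluated in `l` variables. -/
def rectJacobiTrudi (R : Type) [Field R] (l r : ℕ) :
    Matrix (Fin l) (Fin l) (MvPolynomial (Fin l) R) :=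
  .of fun i j => evalVars l (hInt ((r : ℤ) + j - i))

theorem det_rectJacobiTrudi_zero : (rectJacobiTrudi R l 0).det = 1 := by
  rw [Matrix.det_of_isUpperTriangular]
  · exact Finset.prod_eq_one fun i _ => by simp [rectJacobiTrudi, hInt_zero]
  · intro i j hij
    have hji : (j : ℕ) < i := hij
    rw [rectJacobiTrudi, Matrix.of_apply, hInt_of_neg (by omega), map_zero]

theorem det_X_pow_rev_ne_zero :
    Matrix.det (.of fun i k : Fin l => (X k : MvPolynomial (Fin l) R) ^ (l - 1 - i)) ≠ 0 := by
  have h : (.of fun i k : Fin l => (X k : MvPolynomial (Fin l) R) ^ (l - 1 - i)) =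
      ((Matrix.vandermonde fun i : Fin l => (X i : MvPolynomial (Fin l) R)).submatrix id
        Fin.revPerm).transpose := by
    ext1 i j
    simp [Matrix.vandermonde_apply, Fin.val_rev, Nat.sub_sub, add_comm]
  rw [h, Matrix.det_transpose, Matrix.det_permute']
  refine mul_ne_zero ?_ (Matrix.det_vandermonde_ne_zero_iff.mpr X_injective)
  exact ((Units.isUnit _).map (Int.castRingHom _)).ne_zero

variable [CharZero R]

theorem sum_evalVars_hInt_mul_coeff_elemPoly (s : Finset (Fin l)) {k : ℕ} (hs : s.card < k)
    (a : ℕ) (i : Fin k) :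
    ∑ j : Fin k, evalVars (R := R) l (hInt ((a : ℤ) + j - i)) * (elemPoly R s).coeff (k - 1 - j) =
      PowerSeries.coeff (a + (k - 1 - i))
        (∏ i ∈ sᶜ, PowerSeries.mk fun n => (X i : MvPolynomial (Fin l) R) ^ n) := by
  rw [← elemPoly_mul_mk_evalVars_hsym]
  simp only [← hInt_natCast]
  rw [← sum_coeff_mul_eq_coeff_mul (H := fun z => evalVars (R := R) l (hInt z))
    (fun z hz => by rw [hInt_of_neg hz, map_zero]) _ ((natDegree_elemPoly_le s).trans_lt hs)]
  refine Finset.sum_congr rfl fun j _ => ?_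
  congr 3
  omega

/-- The coefficients of `∏ (1 - x_i u)` lie in the kernel of the evaluated Jacobi–Trudi matrix. -/
theorem evalVars_schur_eq_zero (nu : Multiset ℕ+) (h : l < Multiset.card nu) :
    evalVars (R := R) l (schur nu) = 0 := by
  rw [schur_eq_det nu rfl, AlgHom.map_det]
  refine Matrix.exists_mulVec_eq_zero_iff.mp
    ⟨fun j => (elemPoly R (.univ : Finset (Fin l))).coeff (Multiset.card nu - 1 - j), ?_, ?_⟩
  · refine Function.ne_iff.mpr ⟨⟨Multiset.card nu - 1, by omega⟩, ?_⟩
    simp [coeff_zero_elemPoly]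
  · ext1 i
    have hpos := getD_descParts_pos nu i.2
    refine (sum_evalVars_hInt_mul_coeff_elemPoly _ (by simpa using h) _ i).trans ?_
    rw [Finset.compl_univ, Finset.prod_empty, PowerSeries.coeff_one, if_neg (by omega),
      Pi.zero_apply]

theorem rectJacobiTrudi_mul (r : ℕ) :
    rectJacobiTrudi R l r *
      .of (fun j k : Fin l => (elemPoly R (Finset.univ.erase k)).coeff (l - 1 - j)) =
    .of fun i k : Fin l => (X k : MvPolynomial (Fin l) R) ^ (r + (l - 1 - i)) := by
  ext1 i k
  have hcompl : (Finset.univ.erase k)ᶜ = {k} := by ext; simp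
  have hl := k.pos
  have h := sum_evalVars_hInt_mul_coeff_elemPoly (R := R) (Finset.univ.erase k) (k := l)
    (by simp [hl]) r i
  rw [hcompl, Finset.prod_singleton, PowerSeries.coeff_mk] at h
  simpa only [Matrix.mul_apply, rectJacobiTrudi, Matrix.of_apply] using h

theorem evalVars_schur_replicate (r : ℕ+) :
    evalVars (R := R) l (schur (Multiset.replicate l r)) = ∏ i : Fin l, X i ^ (r : ℕ) := by
  have hJT : evalVars (R := R) l (schur (Multiset.replicate l r)) =
      (rectJacobiTrudi R l r).det := by
    rw [schur_eq_det _ (Multiset.card_replicate l r), AlgHom.map_det, descParts_replicate]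
    congr 1
    ext1 i j
    simp [rectJacobiTrudi]
  have h0 := congrArg Matrix.det (rectJacobiTrudi_mul (R := R) (l := l) 0)
  have hr := congrArg Matrix.det (rectJacobiTrudi_mul (R := R) (l := l) r)
  have hdiag : (.of fun i k : Fin l => (X k : MvPolynomial (Fin l) R) ^ ((r : ℕ) + (l - 1 - i))) =
      (.of fun i k : Fin l => (X k : MvPolynomial (Fin l) R) ^ (l - 1 - i)) *
        Matrix.diagonal fun k => (X k : MvPolynomial (Fin l) R) ^ (r : ℕ) := by
    ext1 i k
    rw [Matrix.mul_diagonal, Matrix.of_apply, Matrix.of_apply, ← pow_add, add_comm]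
  simp only [Matrix.det_mul, det_rectJacobiTrudi_zero, one_mul, zero_add] at h0
  rw [Matrix.det_mul, hdiag, Matrix.det_mul, Matrix.det_diagonal, h0, mul_comm] at hr
  rw [hJT, mul_left_cancel₀ det_X_pow_rev_ne_zero hr]

theorem hallForm_hMon_schur_eq_zero {nu : Multiset ℕ+} (h : l < Multiset.card nu) {m : PartExp}
    (hm : partLength m ≤ l) : hallForm (hMon m) (schur (R := R) nu) = 0 := by
  obtain ⟨α, rfl⟩ := exists_eq_partsOf hm
  rw [hallForm_hMon_partsOf, evalVars_schur_eq_zero nu h, coeff_zero]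

theorem hallForm_hMon_schur_replicate (r : ℕ+) {m : PartExp} (hm : partLength m ≤ l) :
    hallForm (hMon m) (schur (R := R) (Multiset.replicate l r)) =
      if m = Finsupp.single r l then 1 else 0 := by
  classical
  have hprod : (∏ i : Fin l, X i ^ (r : ℕ) : MvPolynomial (Fin l) R) =
      monomial (Finsupp.equivFunOnFinite.symm fun _ => (r : ℕ)) 1 := by
    rw [monomial_eq, Finsupp.prod_fintype _ _ (by simp)]
    simp
  have key (α : Fin l → ℕ) : hallForm (hMon (partsOf α)) (schur (R := R) (.replicate l r)) =
      if (fun _ => (r : ℕ)) = α then 1 else 0 := by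
    rw [hallForm_hMon_partsOf, evalVars_schur_replicate, hprod, coeff_monomial]
    simp only [EmbeddingLike.apply_eq_iff_eq]
  have hconst : partsOf (fun _ : Fin l => (r : ℕ)) = Finsupp.single r l := by
    rw [partsOf_const, Fintype.card_fin]
  obtain ⟨α, rfl⟩ := exists_eq_partsOf hm
  split_ifs with h
  · rw [h, ← hconst, key, if_pos rfl]
  · rw [key, if_neg fun hα => h (by rw [← hα, hconst])]

end EvalSchur

/-! ### Triangularity with respect to the complete homogeneous basis -/

/-- The partitions of the same size as `m` with at most as many parts and a larger sum of squares.
Dominance would give a smaller set, but `partSumSq` is additive, so that triangularity in this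
sense is visibly multiplicative. -/
def partsAbove (m : PartExp) : Set PartExp :=
  {m' | partSize m' = partSize m ∧ partLength m' ≤ partLength m ∧ partSumSq m < partSumSq m'}

theorem partsAbove_subset {m m' : PartExp} (h : m' ∈ partsAbove m) :
    partsAbove m' ⊆ partsAbove m := fun _ h' =>
  ⟨h'.1.trans h.1, h'.2.1.trans h.2.1, h.2.2.trans h'.2.2⟩

theorem add_mem_partsAbove {m n m' n' : PartExp} (hm : m' ∈ insert m (partsAbove m))
    (hn : n' ∈ insert n (partsAbove n)) (h : m' ∈ partsAbove m ∨ n' ∈ partsAbove n) :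
    m' + n' ∈ partsAbove (m + n) := by
  simp only [partsAbove, Set.mem_insert_iff, Set.mem_ofPred_eq, map_add] at *
  rcases hm with rfl | hm <;> rcases hn with rfl | hn <;> omega

theorem partSumSq_le_sq (m : PartExp) : partSumSq m ≤ partSize m ^ 2 := by
  induction m using Finsupp.induction_linear with
  | zero => simp
  | add f g hf hg => rw [map_add, map_add, add_sq]; nlinarith
  | single k e =>
    rw [partSumSq_single, partSize_single, mul_pow]
    exact Nat.mul_le_mul_right _ (Nat.le_self_pow two_ne_zero e)

theorem finite_partSize_le (n : ℕ) : {m : PartExp | partSize m ≤ n}.Finite := by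
  have hs : {k : ℕ+ | (k : ℕ) ≤ n}.Finite :=
    (Set.finite_le_nat n).preimage PNat.coe_injective.injOn
  refine (Set.finite_Iic (∑ k ∈ hs.toFinset, Finsupp.single k n)).subset fun m hm k => ?_
  have hmk : m k * k ≤ n := by
    refine le_trans ?_ (hm : partSize m ≤ n)
    rw [← partSize_single, ← Finsupp.single_add_erase k m, map_add]
    simp
  rcases Nat.eq_zero_or_pos (m k) with h | h
  · exact h ▸ Nat.zero_le _
  · have hk : (k : ℕ) ≤ n := (Nat.le_mul_of_pos_left _ h).trans hmk
    simpa [Finsupp.finsetSum_apply, Finsupp.single_apply, hk] using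
      (Nat.le_mul_of_pos_right _ k.pos).trans hmk

theorem eq_one_of_forall_lt_imp_le {k : ℕ} {σ : Equiv.Perm (Fin k)}
    (h : ∀ i j, i < j → σ i ≤ σ j) : σ = 1 := by
  have hs : StrictMono σ := fun i j hij => (h i j hij).lt_of_ne (σ.injective.ne hij.ne)
  have hid : hs.orderIsoOfSurjective _ σ.surjective = OrderIso.refl _ := Subsingleton.elim _ _
  ext1 i
  exact congrArg (fun e : Fin k ≃o Fin k => e i) hid

/-- By the rearrangement inequality: the cross terms `a i * i` are smallest for the identity. -/
theorem sum_add_sq_lt_sum_comp_perm_add_sq {k : ℕ} {a : Fin k → ℤ} (ha : StrictAnti a)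
    {σ : Equiv.Perm (Fin k)} (hσ : σ ≠ 1) :
    ∑ i, (a i + (i : ℤ)) ^ 2 < ∑ i, (a (σ i) + (i : ℤ)) ^ 2 := by
  have hanti : Antivary a fun i : Fin k => (i : ℤ) := fun i j hij => (ha (by simpa using hij)).le
  have hcross : ∑ i, a i * (i : ℤ) < ∑ i, a (σ i) * (i : ℤ) := by
    refine hanti.sum_mul_lt_sum_comp_perm_mul_iff.mpr fun h => hσ ?_
    exact eq_one_of_forall_lt_imp_le fun i j hij =>
      ha.le_iff_ge.mp (h (i := i) (j := j) (by simpa using hij))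
  have hsq : ∑ i, a (σ i) ^ 2 = ∑ i, a i ^ 2 := Equiv.sum_comp σ fun i => a i ^ 2
  simp only [add_sq, Finset.sum_add_distrib, mul_assoc, ← Finset.mul_sum, hsq]
  linarith

theorem getD_descParts_antitone (nu : Multiset ℕ+) :
    Antitone fun i : ℕ => (descParts nu).getD i 0 := fun i j h => by
  have hp : (descParts nu).Pairwise (fun a b => b ≤ a) := by
    rw [descParts, List.pairwise_reverse]
    exact Multiset.pairwise_sort _ _
  rcases lt_or_ge j (descParts nu).length with hj | hj
  · rcases h.lt_or_eq with h' | rfl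
    · simp only [List.getD_eq_getElem _ _ hj, List.getD_eq_getElem _ _ (h'.trans hj)]
      exact List.pairwise_iff_getElem.mp hp i j _ _ h'
    · exact le_rfl
  · simp only [List.getD_eq_default _ _ hj, zero_le]

section Triangular

variable {R : Type} [Field R]

/-- `f` is `c • h_m` plus a combination of products `h_{m'}` with `m'` above `m`. -/
def HasLeadingHMon (c : R) (m : PartExp) (f : SymFn R) : Prop :=
  f - c • hMon m ∈ Submodule.span R (hMon '' partsAbove m)

theorem hasLeadingHMon_hMon (m : PartExp) : HasLeadingHMon (1 : R) m (hMon m) := by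
  simp [HasLeadingHMon]

theorem mul_mem_span_hMon {S T U : Set PartExp} (hU : ∀ a ∈ S, ∀ b ∈ T, a + b ∈ U)
    {f g : SymFn R} (hf : f ∈ Submodule.span R (hMon '' S))
    (hg : g ∈ Submodule.span R (hMon '' T)) : f * g ∈ Submodule.span R (hMon '' U) := by
  have h := Submodule.mul_mem_mul hf hg
  rw [Submodule.span_mul_span] at h
  refine Submodule.span_mono ?_ h
  rintro _ ⟨_, ⟨a, ha, rfl⟩, _, ⟨b, hb, rfl⟩, rfl⟩
  exact ⟨a + b, hU a ha b hb, hMon_add a b⟩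

theorem HasLeadingHMon.mem_span {c : R} {m : PartExp} {f : SymFn R} (h : HasLeadingHMon c m f) :
    f ∈ Submodule.span R (hMon '' insert m (partsAbove m)) := by
  rw [← sub_add_cancel f (c • hMon m)]
  exact add_mem (Submodule.span_mono (Set.image_mono (Set.subset_insert _ _)) h)
    (Submodule.smul_mem _ _ (Submodule.subset_span ⟨m, Set.mem_insert _ _, rfl⟩))

theorem HasLeadingHMon.mul {b c : R} {m n : PartExp} {f g : SymFn R}
    (hf : HasLeadingHMon b m f) (hg : HasLeadingHMon c n g) :
    HasLeadingHMon (b * c) (m + n) (f * g) := by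
  have hsplit : f * g - (b * c) • hMon (m + n) =
      (f - b • hMon m) * g + (b • hMon m) * (g - c • hMon n) := by
    simp only [hMon_add, smul_eq_C_mul, C_mul]; ring
  rw [HasLeadingHMon, hsplit]
  refine add_mem (mul_mem_span_hMon (fun u hu v hv => ?_) hf hg.mem_span)
    (mul_mem_span_hMon (S := {m}) (fun u hu v hv => ?_) ?_ hg)
  · exact add_mem_partsAbove (Set.mem_insert_of_mem _ hu) hv (.inl hu)
  · exact add_mem_partsAbove (hu ▸ Set.mem_insert _ _) (Set.mem_insert_of_mem _ hv) (.inr hv)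
  · exact Submodule.smul_mem _ _ (Submodule.subset_span ⟨m, rfl, rfl⟩)

theorem HasLeadingHMon.pow {c : R} {m : PartExp} {f : SymFn R} (h : HasLeadingHMon c m f) (e : ℕ) :
    HasLeadingHMon (c ^ e) (e • m) (f ^ e) := by
  induction e with
  | zero => simpa [hMon_zero] using hasLeadingHMon_hMon (R := R) 0
  | succ e ih =>
    rw [pow_succ, succ_nsmul, pow_succ]
    exact ih.mul h

theorem hMon_mem_span_of_hasLeadingHMon {y : PartExp → SymFn R} {c : PartExp → R}
    (hc : ∀ m, c m ≠ 0) (h : ∀ m, HasLeadingHMon (c m) m (y m)) (m : PartExp) :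
    hMon m ∈ Submodule.span R (y '' insert m (partsAbove m)) := by
  induction hN : partSize m ^ 2 - partSumSq m using Nat.strong_induction_on generalizing m with
  | _ N ih =>
    have habove : Submodule.span R (hMon '' partsAbove m) ≤
        Submodule.span R (y '' insert m (partsAbove m)) := by
      rw [Submodule.span_le]
      rintro _ ⟨m', hm', rfl⟩
      have hlt : partSize m' ^ 2 - partSumSq m' < N := by
        have hle := partSumSq_le_sq m'
        rw [hm'.1] at hle ⊢
        have := hm'.2.2
        omega
      refine Submodule.span_mono (Set.image_mono ?_) (ih _ hlt m' rfl)
      exact (Set.insert_subset hm' (partsAbove_subset hm')).trans (Set.subset_insert _ _)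
    have hy : y m ∈ Submodule.span R (y '' insert m (partsAbove m)) :=
      Submodule.subset_span ⟨m, Set.mem_insert _ _, rfl⟩
    have hmem := Submodule.smul_mem _ (c m)⁻¹ (Submodule.sub_mem _ hy (habove (h m)))
    rwa [sub_sub_cancel, smul_smul, inv_mul_cancel₀ (hc m), one_smul] at hmem

theorem prod_hInt_mem_span_partsAbove (nu : Multiset ℕ+) {σ : Equiv.Perm (Fin (Multiset.card nu))}
    (hσ : σ ≠ 1) : ∏ i, hInt (R := R) (((descParts nu).getD (σ i) 0 : ℕ) + (i : ℤ) - σ i) ∈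
      Submodule.span R (hMon '' partsAbove (Multiset.toFinsupp nu)) := by
  set a : Fin (Multiset.card nu) → ℤ := fun i => ((descParts nu).getD i 0 : ℕ) - (i : ℤ) with ha
  have hterm (i) : (((descParts nu).getD (σ i) 0 : ℕ) + (i : ℤ) - σ i) = a (σ i) + i := by
    simp only [ha]; ring
  simp only [hterm]
  by_cases! hneg : ∃ i, a (σ i) + (i : ℤ) < 0
  · obtain ⟨i, hi⟩ := hneg
    rw [Finset.prod_eq_zero (Finset.mem_univ i) (hInt_of_neg hi)]
    exact Submodule.zero_mem _
  · lift (fun i => a (σ i) + (i : ℤ)) to Fin (Multiset.card nu) → ℕ using hneg with α hα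
    have hα' (i) : a (σ i) + (i : ℤ) = α i := (congrFun hα i).symm
    have hanti : StrictAnti a := fun i j hij => by
      have hle : (descParts nu).getD j 0 ≤ (descParts nu).getD i 0 :=
        getD_descParts_antitone nu hij.le
      have : (i : ℕ) < j := hij
      simp only [ha]; omega
    have hparts (i : Fin (Multiset.card nu)) :
        (((descParts nu).getD i 0 : ℕ) : ℤ) = a i + i := (sub_add_cancel _ _).symm
    refine Submodule.subset_span ⟨partsOf α, ?_, by simp only [hMon_partsOf, hα', hInt_natCast]⟩
    rw [toFinsupp_eq_partsOf nu le_rfl]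
    refine ⟨?_, ?_, ?_⟩
    · rw [partSize_partsOf, partSize_partsOf]
      zify
      simp only [← hα', hparts, Finset.sum_add_distrib, Equiv.sum_comp σ a]
    · rw [← toFinsupp_eq_partsOf nu le_rfl, partLength_toFinsupp]
      exact (partLength_partsOf_le α).trans_eq (Fintype.card_fin _)
    · rw [partSumSq_partsOf, partSumSq_partsOf]
      zify
      simp only [← hα', hparts]
      exact sum_add_sq_lt_sum_comp_perm_add_sq hanti hσ

theorem hasLeadingHMon_schur (nu : Multiset ℕ+) :
    HasLeadingHMon (1 : R) (Multiset.toFinsupp nu) (schur nu) := by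
  have hone : hMon (R := R) (Multiset.toFinsupp nu) =
      ∏ i : Fin (Multiset.card nu), hInt (((descParts nu).getD i 0 : ℕ) + (i : ℤ) - i) := by
    rw [toFinsupp_eq_partsOf nu le_rfl, hMon_partsOf]
    simp only [add_sub_cancel_right, hInt_natCast]
  rw [HasLeadingHMon, one_smul, hone, schur_eq_det nu rfl, Matrix.det_apply,
    ← Finset.add_sum_erase _ _ (Finset.mem_univ 1), Equiv.Perm.sign_one, one_smul]
  simp only [Matrix.of_apply, Equiv.Perm.coe_one, id_eq, add_sub_cancel_left]
  refine Submodule.sum_mem _ fun σ hσ => ?_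
  rw [Units.smul_def]
  exact zsmul_mem (prod_hInt_mem_span_partsAbove nu (Finset.ne_of_mem_erase hσ)) _

/-- By counting dimensions. -/
theorem linearIndepOn_of_monomial_mem_span {S : Set PartExp} (hS : S.Finite)
    {y : PartExp → SymFn R} (h : ∀ m ∈ S, monomial m (1 : R) ∈ Submodule.span R (y '' S)) :
    LinearIndepOn R y S := by
  have := hS.fintype
  have hm : LinearIndepOn R (fun m => (monomial m (1 : R) : SymFn R)) S := by
    rw [← coe_basisMonomials]
    exact (basisMonomials ℕ+ R).linearIndependent.linearIndepOn _
  rw [LinearIndepOn, linearIndependent_iff_card_eq_finrank_span] at hm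
  rw [LinearIndepOn, linearIndependent_iff_card_le_finrank_span, hm, ← Set.image_eq_range y,
    ← Set.image_eq_range (fun m => (monomial m (1 : R) : SymFn R))]
  have := FiniteDimensional.span_of_finite R (hS.image y)
  refine Submodule.finrank_mono (Submodule.span_le.mpr ?_)
  rintro _ ⟨m, hm, rfl⟩
  exact h m hm

theorem linearIndependent_of_monomial_mem_span {y : PartExp → SymFn R}
    (h : ∀ m, monomial m (1 : R) ∈ Submodule.span R (y '' {m' | partSize m' = partSize m})) :
    LinearIndependent R y := by
  have hU : (⋃ n, {m | partSize m ≤ n}) = Set.univ :=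
    Set.eq_univ_of_forall fun m => Set.mem_iUnion.mpr ⟨partSize m, le_refl (partSize m)⟩
  rw [← linearIndepOn_univ_iff, ← hU]
  refine linearIndepOn_iUnion_of_directed ?_ fun n =>
    linearIndepOn_of_monomial_mem_span (finite_partSize_le n) fun m hm => ?_
  · exact Monotone.directed_le fun _ _ h _ hm => le_trans hm h
  · exact Submodule.span_mono (Set.image_mono fun m' hm' => hm'.trans_le hm) (h m)

variable [CharZero R]

theorem X_mem_span_hMon (k : ℕ+) :
    (X k : SymFn R) ∈ Submodule.span R (hMon '' {m | partSize m = k ∧ 1 ≤ partLength m}) := by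
  induction k using PNat.strongInductionOn with
  | _ k ih =>
    obtain ⟨n, rfl⟩ : ∃ n : ℕ, k = n.succPNat := ⟨k.natPred, (PNat.succPNat_natPred k).symm⟩
    have hX := (hasLogDeriv_mk_iff.mp (hasLogDeriv_hsym (R := R))).2 n
    rw [Finset.sum_range_succ, Nat.sub_self, hsym_zero, mul_one] at hX
    have hcast : (n : SymFn R) + 1 = C ((n : R) + 1) := by simp
    rw [← sub_eq_of_eq_add' hX, hcast, mul_comm, ← smul_eq_C_mul]
    have hh (j : ℕ) : hsym (R := R) j ∈ Submodule.span R (hMon '' {m | partSize m = j}) :=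
      Submodule.subset_span ⟨onePart j, partSize_onePart j, hMon_onePart j⟩
    refine sub_mem (Submodule.smul_mem _ _ ?_) (Submodule.sum_mem _ fun i hi => ?_)
    · refine Submodule.subset_span ⟨Finsupp.single n.succPNat 1, ?_, by simp [hMon_single]⟩
      rw [Set.mem_ofPred_eq, partSize_single, partLength_single, one_mul]
      exact ⟨rfl, le_rfl⟩
    have hi' : i < n := Finset.mem_range.mp hi
    refine mul_mem_span_hMon (fun a ha b hb => ?_)
      (ih i.succPNat (Nat.succPNat_lt_succPNat.mpr hi')) (hh (n - i))
    rw [Set.mem_ofPred_eq, map_add, map_add, ha.1, hb, Nat.succPNat_coe, Nat.succPNat_coe]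
    exact ⟨by omega, ha.2.trans (Nat.le_add_right _ _)⟩

theorem monomial_mem_span_hMon (m : PartExp) : monomial m (1 : R) ∈
    Submodule.span R (hMon '' {m' | partSize m' = partSize m ∧ partLength m ≤ partLength m'}) := by
  induction m using Finsupp.induction_linear with
  | zero => exact Submodule.subset_span ⟨0, by simp, by rw [hMon_zero, ← C_apply, C_1]⟩
  | add f g hf hg =>
    rw [← one_mul (1 : R), ← monomial_mul]
    refine mul_mem_span_hMon (fun a ha b hb => ?_) hf hg
    simp only [Set.mem_ofPred_eq, map_add] at *
    omega
  | single k e =>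
    rw [partSize_single, partLength_single, ← X_pow_eq_monomial]
    induction e with
    | zero => exact Submodule.subset_span ⟨0, by simp, by rw [hMon_zero, pow_zero]⟩
    | succ e ih =>
      rw [pow_succ, Nat.succ_mul]
      refine mul_mem_span_hMon (fun a ha b hb => ?_) ih (X_mem_span_hMon k)
      simp only [Set.mem_ofPred_eq, map_add] at *
      omega

theorem linearIndependent_of_hasLeadingHMon {y : PartExp → SymFn R} {c : PartExp → R}
    (hc : ∀ m, c m ≠ 0) (h : ∀ m, HasLeadingHMon (c m) m (y m)) : LinearIndependent R y := by
  refine linearIndependent_of_monomial_mem_span fun m => ?_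
  refine Submodule.span_le.mpr ?_ (monomial_mem_span_hMon m)
  rintro _ ⟨m', hm', rfl⟩
  refine Submodule.span_mono (Set.image_mono ?_) (hMon_mem_span_of_hasLeadingHMon hc h m')
  exact Set.insert_subset hm'.1 fun u hu => hu.1.trans hm'.1

end Triangular

theorem HasLogDeriv.expand {S : Type*} [CommRing S] {d : ℕ} (hd : d ≠ 0) {A Y : PowerSeries S}
    (h : HasLogDeriv Y A) : HasLogDeriv (PowerSeries.expand d hd Y)
      ((d : PowerSeries S) * (PowerSeries.X ^ (d - 1) * PowerSeries.expand d hd A)) := by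
  refine ⟨by rw [PowerSeries.constantCoeff_expand, h.1], ?_⟩
  rw [PowerSeries.expand_apply, PowerSeries.derivative_subst (.X_pow hd), h.2,
    ← PowerSeries.expand_apply _ hd, ← PowerSeries.expand_apply _ hd, map_mul,
    PowerSeries.derivative_pow, PowerSeries.derivative_X]
  ring

/-! ### Factorisation of the plethysm `p_d ∘ h_i` at a root of unity -/

section RootOfUnity

variable {R : Type} [Field R] {d : ℕ} {z : R}

theorem sum_rootOfUnity_pow (hz : IsPrimitiveRoot z d) (n : ℕ) :
    ∑ j : Fin d, (z ^ (j : ℕ)) ^ n = if d ∣ n then (d : R) else 0 := by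
  simp only [← pow_mul, mul_comm _ n]
  simp only [pow_mul z n, Fin.sum_univ_eq_sum_range fun j => (z ^ n) ^ j]
  split_ifs with h
  · simp [(hz.pow_eq_one_iff_dvd n).mpr h]
  · have hne : z ^ n ≠ 1 := fun h' => h ((hz.pow_eq_one_iff_dvd n).mp h')
    rw [geom_sum_eq hne, ← pow_mul, mul_comm, pow_mul, hz.pow_eq_one, one_pow, sub_self, zero_div]

theorem prod_rootOfUnity (hz : IsPrimitiveRoot z d) (hd : 0 < d) :
    ∏ j : Fin d, z ^ (j : ℕ) = (-1) ^ (d - 1) := by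
  classical
  have hroots : ∏ j : Fin d, z ^ (j : ℕ) = ∏ x ∈ Polynomial.nthRootsFinset d (1 : R), x := by
    rw [Fin.prod_univ_eq_prod_range (fun j => z ^ j), Polynomial.nthRootsFinset_def,
      Finset.prod_eq_multiset_prod, Finset.prod_eq_multiset_prod, Multiset.toFinset_val,
      hz.nthRoots_one_nodup.dedup, hz.nthRoots_eq (one_pow d)]
    simp
  have hprod := hz.pow_sub_pow_eq_prod_sub_mul 0 (-1) hd
  simp only [zero_sub, mul_neg, mul_one, neg_neg, zero_pow hd.ne'] at hprod
  rw [hroots, ← hprod]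
  obtain ⟨e, rfl⟩ : ∃ e, d = e + 1 := ⟨d - 1, by omega⟩
  rw [pow_succ, mul_neg_one, neg_neg, Nat.add_sub_cancel]

end RootOfUnity

section PlethFactor

variable {R : Type} [Field R] [CharZero R] {d : ℕ+} {z : R}

/-- Both sides have the same logarithmic derivative. -/
theorem prod_mk_hsym_eq_expand (hz : IsPrimitiveRoot z d) :
    ∏ j : Fin d, PowerSeries.mk (fun n => (C (z ^ (j : ℕ)) : SymFn R) ^ n * hsym n) =
      PowerSeries.expand d d.ne_zero (PowerSeries.mk fun n => plethP d (hsym n)) := by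
  refine (HasLogDeriv.prod _ fun j _ => hasLogDeriv_hsym.rescale _).unique ?_
  refine (congrArg _ ?_).mpr ((hasLogDeriv_hsym.map (plethP d).toRingHom).expand d.ne_zero)
  ext1 n
  have hsum : ∑ j : Fin d, (C (z ^ (j : ℕ)) : SymFn R) ^ (n + 1) =
      if (d : ℕ) ∣ n + 1 then (d : SymFn R) else 0 := by
    simp only [← map_pow, ← map_sum]
    rw [sum_rootOfUnity_pow hz (n + 1), apply_ite C, C_0, map_natCast]
  rw [map_sum]
  simp only [PowerSeries.coeff_mk, ← Finset.sum_mul, hsum]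
  rw [← map_natCast (PowerSeries.C (R := SymFn R)), PowerSeries.coeff_C_mul,
    PowerSeries.coeff_X_pow_mul', ite_mul, zero_mul]
  have hd := d.pos
  split_ifs with hdvd hle hle
  · obtain ⟨k, hk⟩ := hdvd
    obtain ⟨k, rfl⟩ : ∃ e, k = e + 1 := ⟨k - 1, by grind⟩
    rw [show n - (d - 1) = d * k by grind, PowerSeries.coeff_expand_mul, PowerSeries.coeff_mk]
    simp only [AlgHom.toRingHom_eq_coe, RingHom.coe_coe, plethP, aeval_X]
    congr 2
    exact PNat.eq hk
  · exact absurd (Nat.le_of_dvd n.succ_pos hdvd) (by omega)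
  · rw [PowerSeries.coeff_expand_of_not_dvd, mul_zero]
    exact fun h => hdvd (by simpa [show n - (d - 1) + d = n + 1 by omega] using h.add dvd_rfl)
  · rw [mul_zero]

/-- The constant family is the shortest vector with a given coordinate sum. -/
theorem partsOf_mem_partsAbove {i : ℕ+} {α : Fin d → ℕ} (hsum : ∑ j, α j = d * i)
    (hα : α ≠ fun _ => (i : ℕ)) : partsOf α ∈ partsAbove (Finsupp.single i (d : ℕ)) := by
  refine ⟨?_, ?_, ?_⟩
  · rw [partSize_partsOf, partSize_single, hsum]
  · rw [partLength_single]
    exact (partLength_partsOf_le α).trans_eq (Fintype.card_fin _)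
  · obtain ⟨j, hj⟩ := Function.ne_iff.mp hα
    have hpos : 0 < ∑ j, ((α j : ℤ) - i) ^ 2 :=
      Finset.sum_pos' (fun _ _ => sq_nonneg _)
        ⟨j, Finset.mem_univ j, sq_pos_of_ne_zero (sub_ne_zero.mpr (mod_cast hj))⟩
    have hexpand : ∑ j, ((α j : ℤ) - i) ^ 2 = ∑ j, (α j : ℤ) ^ 2 - d * (i : ℤ) ^ 2 := by
      have hsum' : ∑ j, (α j : ℤ) = d * i := mod_cast hsum
      simp only [sub_sq, Finset.sum_add_distrib, Finset.sum_sub_distrib, ← Finset.sum_mul,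
        ← Finset.mul_sum, hsum', Finset.sum_const, Finset.card_univ, Fintype.card_fin,
        nsmul_eq_mul]
      ring
    rw [partSumSq_partsOf, partSumSq_single]
    zify
    linarith

theorem hasLeadingHMon_plethP_hsym (hz : IsPrimitiveRoot z d) (i : ℕ+) :
    HasLeadingHMon ((-1 : R) ^ (i * (d - 1) : ℕ)) (Finsupp.single i (d : ℕ))
      (plethP d (hsym i)) := by
  have hcoeff : plethP d (hsym (R := R) i) = ∑ α ∈ Finset.univ.finsuppAntidiag (d * i : ℕ),
      (∏ j : Fin d, (z ^ (j : ℕ)) ^ α j) • hMon (partsOf α) := by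
    rw [← PowerSeries.coeff_mk (R := SymFn R) i fun n => plethP d (hsym n),
      ← PowerSeries.coeff_expand_mul d d.ne_zero, ← prod_mk_hsym_eq_expand hz,
      PowerSeries.coeff_prod]
    refine Finset.sum_congr rfl fun α _ => ?_
    simp only [PowerSeries.coeff_mk, Finset.prod_mul_distrib, hMon_partsOf, smul_eq_C_mul,
      map_prod, map_pow]
  let α₀ : Fin d →₀ ℕ := Finsupp.equivFunOnFinite.symm fun _ => (i : ℕ)
  have hα₀ : α₀ ∈ Finset.univ.finsuppAntidiag (d * i : ℕ) := by simp [α₀]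
  have hsign : ∏ j : Fin d, (z ^ (j : ℕ)) ^ α₀ j = (-1) ^ (i * (d - 1) : ℕ) := by
    change ∏ j : Fin d, (z ^ (j : ℕ)) ^ (i : ℕ) = _
    rw [Finset.prod_pow, prod_rootOfUnity hz d.pos, ← pow_mul, mul_comm]
  have hparts : partsOf α₀ = Finsupp.single i (d : ℕ) :=
    (partsOf_const i).trans (by rw [Fintype.card_fin])
  rw [HasLeadingHMon, hcoeff, ← Finset.add_sum_erase _ _ hα₀, hsign, hparts, add_sub_cancel_left]
  refine Submodule.sum_mem _ fun α hα => Submodule.smul_mem _ _ (Submodule.subset_span ⟨_, ?_, rfl⟩)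
  rw [Finset.mem_erase, Finset.mem_finsuppAntidiag] at hα
  exact partsOf_mem_partsAbove hα.2.1 fun h => hα.1 (DFunLike.coe_injective h)

end PlethFactor

/-! ### A basis adapted to the factorisation -/

section Depth

variable (d : ℕ+)

/-- The partition whose multiplicities are the quotients by `d` of those of `κ`. -/
def partQuo (κ : PartExp) : PartExp := κ.mapRange (· / (d : ℕ)) (Nat.zero_div d)

/-- The partition whose multiplicities are the remainders modulo `d` of those of `κ`. -/
def partRem (κ : PartExp) : PartExp := κ.mapRange (· % (d : ℕ)) (Nat.zero_mod d)

/-- The number of blocks of `d` equal parts in `κ`. It is the order of vanishing at `t = ζ` that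
`plethHMon d κ` contributes to the Gram matrix of the deformed form. -/
def partDepth (κ : PartExp) : ℕ := partLength (partQuo d κ)

theorem smul_partQuo_add_partRem (κ : PartExp) : (d : ℕ) • partQuo d κ + partRem d κ = κ := by
  ext k
  simp [partQuo, partRem, Nat.div_add_mod]

variable {d}

theorem partQuo_smul_add (ν κ : PartExp) : partQuo d ((d : ℕ) • ν + κ) = ν + partQuo d κ := by
  ext k
  simp [partQuo, Nat.mul_add_div d.pos]

theorem partRem_smul_add (ν κ : PartExp) : partRem d ((d : ℕ) • ν + κ) = partRem d κ := by
  ext k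
  simp [partRem]

theorem partDepth_smul_add (ν κ : PartExp) :
    partDepth d ((d : ℕ) • ν + κ) = partLength ν + partDepth d κ := by
  rw [partDepth, partQuo_smul_add, map_add, partDepth]

end Depth

section PlethHMon

variable {R : Type} [Field R] {d : ℕ+}

theorem plethP_eq_rename : plethP (R := R) d = rename (d * ·) :=
  algHom_ext fun k => by rw [plethP, aeval_X, rename_X]

/-- The product `h_κ` with each block `h_k ^ d` replaced by `p_d ∘ h_k`. -/
def plethHMon (d : ℕ+) (κ : PartExp) : SymFn R :=
  plethP d (hMon (partQuo d κ)) * hMon (partRem d κ)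

theorem plethHMon_smul_add (ν κ : PartExp) : plethHMon (R := R) d ((d : ℕ) • ν + κ) =
    plethP d (hMon ν) * plethHMon d κ := by
  rw [plethHMon, partQuo_smul_add, partRem_smul_add, hMon_add, map_mul, mul_assoc, plethHMon]

theorem plethHMon_smul (ν : PartExp) :
    plethHMon (R := R) d ((d : ℕ) • ν) = plethP d (hMon ν) := by
  simpa [plethHMon, partQuo, partRem, hMon_zero] using plethHMon_smul_add (R := R) (d := d) ν 0

variable [CharZero R] {z : R}

theorem hasLeadingHMon_plethP_hMon (hz : IsPrimitiveRoot z d) (ν : PartExp) :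
    HasLeadingHMon ((-1 : R) ^ (partSize ν * (d - 1) : ℕ)) ((d : ℕ) • ν)
      (plethP d (hMon ν)) := by
  induction ν using Finsupp.induction_linear with
  | zero => simpa [hMon_zero] using hasLeadingHMon_hMon (R := R) 0
  | add f g hf hg =>
    rw [map_add, add_mul, pow_add, smul_add, hMon_add, map_mul]
    exact hf.mul hg
  | single k e =>
    have hk : (d : ℕ) • Finsupp.single k e = e • Finsupp.single k (d : ℕ) := by simp [mul_comm]
    rw [hk, partSize_single, mul_assoc, mul_comm e, pow_mul, hMon_single, map_pow]
    exact (hasLeadingHMon_plethP_hsym hz k).pow e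

theorem hasLeadingHMon_plethHMon (hz : IsPrimitiveRoot z d) (κ : PartExp) :
    HasLeadingHMon ((-1 : R) ^ (partSize (partQuo d κ) * (d - 1) : ℕ)) κ (plethHMon d κ) := by
  have h := (hasLeadingHMon_plethP_hMon hz (partQuo d κ)).mul (hasLeadingHMon_hMon (partRem d κ))
  rwa [mul_one, smul_partQuo_add_partRem] at h

theorem hMon_mem_span_plethHMon (hz : IsPrimitiveRoot z d) (m : PartExp) :
    hMon (R := R) m ∈ Submodule.span R (plethHMon d '' insert m (partsAbove m)) :=
  hMon_mem_span_of_hasLeadingHMon (fun _ => pow_ne_zero _ (neg_ne_zero.mpr one_ne_zero))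
    (hasLeadingHMon_plethHMon hz) m

theorem linearIndependent_plethHMon (hz : IsPrimitiveRoot z d) :
    LinearIndependent R (plethHMon (R := R) d) :=
  linearIndependent_of_hasLeadingHMon (fun _ => pow_ne_zero _ (neg_ne_zero.mpr one_ne_zero))
    (hasLeadingHMon_plethHMon hz)

theorem exists_mapDomain_add_eq (μ : PartExp) :
    ∃ u w : PartExp, μ = u.mapDomain (d * ·) + w ∧ partLength u = partNumDvd d μ := by
  induction μ using Finsupp.induction_linear with
  | zero => exact ⟨0, 0, by simp, by simp⟩
  | add f g hf hg =>
    obtain ⟨u, w, rfl, hu⟩ := hf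
    obtain ⟨u', w', rfl, hu'⟩ := hg
    exact ⟨u + u', w + w', by rw [Finsupp.mapDomain_add]; abel, by rw [map_add, map_add, hu, hu']⟩
  | single k e =>
    by_cases hk : (d : ℕ) ∣ k
    · obtain ⟨c, rfl⟩ := PNat.dvd_iff.mpr hk
      refine ⟨Finsupp.single c e, 0, by simp, ?_⟩
      rw [partLength_single, partNumDvd_single, if_pos hk]
    · exact ⟨0, Finsupp.single k e, by simp, by rw [partNumDvd_single, if_neg hk, map_zero]⟩

theorem monomial_mem_span_plethHMon (hz : IsPrimitiveRoot z d) (μ : PartExp) :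
    monomial μ (1 : R) ∈
      Submodule.span R (plethHMon d '' {κ | partNumDvd d μ ≤ partDepth d κ}) := by
  obtain ⟨u, w, rfl, hu⟩ := exists_mapDomain_add_eq (d := d) μ
  have hpleth : plethP d (monomial u (1 : R)) ∈
      Submodule.span R ((plethP d ∘ hMon) '' {ν | partLength u ≤ partLength ν}) := by
    rw [Set.image_comp, ← AlgHom.coe_toLinearMap, ← Submodule.map_span]
    exact Submodule.mem_map_of_mem (Submodule.span_mono (Set.image_mono fun m hm => hm.2)
      (monomial_mem_span_hMon u))
  have hrest : monomial w (1 : R) ∈ Submodule.span R (Set.range (plethHMon d)) := by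
    refine Submodule.span_le.mpr ?_ (monomial_mem_span_hMon w)
    rintro _ ⟨m, -, rfl⟩
    exact Submodule.span_mono (Set.image_subset_range _ _) (hMon_mem_span_plethHMon hz m)
  have hmul := Submodule.mul_mem_mul hpleth hrest
  have hmon : monomial (u.mapDomain (d * ·) + w) (1 : R) =
      plethP d (monomial u 1) * monomial w 1 := by
    rw [plethP_eq_rename, rename_monomial, monomial_mul, mul_one]
  rw [Submodule.span_mul_span] at hmul
  rw [hmon]
  refine Submodule.span_mono ?_ hmul
  rintro _ ⟨_, ⟨ν, hν, rfl⟩, _, ⟨κ, rfl⟩, rfl⟩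
  refine ⟨(d : ℕ) • ν + κ, ?_, plethHMon_smul_add ν κ⟩
  rw [Set.mem_ofPred_eq, ← hu, partDepth_smul_add]
  exact Nat.le_add_right_of_le hν

end PlethHMon

/-! ### Monomials occurring in the basis -/

section Support

variable {R : Type} [Field R] {d : ℕ+}

theorem mul_mem_restrictSupport {s t u : Set PartExp} (h : ∀ a ∈ s, ∀ b ∈ t, a + b ∈ u)
    {f g : SymFn R} (hf : f ∈ restrictSupport R s) (hg : g ∈ restrictSupport R t) :
    f * g ∈ restrictSupport R u := by
  refine restrictSupport_mono R (Set.add_subset_iff.mpr h) ?_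
  rw [restrictSupport_add]
  exact Submodule.mul_mem_mul hf hg

theorem hsym_mem_restrictSupport (n : ℕ) : hsym (R := R) n ∈
    restrictSupport R (insert (onePart n) {m | partLength (onePart n) < partLength m}) := by
  induction n using Nat.strong_induction_on with
  | _ n ih =>
  rcases n with _ | n
  · rw [hsym_zero, ← C_1, C_apply]
    exact (monomial_mem_restrictSupport R).mpr (.inl (Set.mem_insert _ _))
  · rw [hsym, Finset.sum_range_succ]
    refine Submodule.smul_mem _ _ (add_mem (Submodule.sum_mem _ fun i hi => ?_) ?_)
    · have hlen (k : ℕ) (hk : 0 < k) : partLength (onePart k) = 1 := by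
        lift k to ℕ+ using hk
        rw [onePart_coe, partLength_single]
      have hi' : i < n := Finset.mem_range.mp hi
      refine mul_mem_restrictSupport (s := {m | partLength m = 1}) (fun a ha b hb => ?_)
        ((monomial_mem_restrictSupport R).mpr (.inl (partLength_single _ _)))
        (ih (n - i) (by omega))
      right
      simp only [Set.mem_insert_iff, Set.mem_ofPred_eq, map_add, hlen _ n.succ_pos,
        hlen (n - i) (by omega)] at *
      rcases hb with rfl | hb <;> grind
    · rw [Nat.sub_self, hsym_zero, mul_one]
      exact (monomial_mem_restrictSupport R).mpr (.inl (Set.mem_insert _ _))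

theorem hMon_mem_restrictSupport (ν : PartExp) : hMon (R := R) ν ∈
    restrictSupport R (insert ν {m | partLength ν < partLength m}) := by
  have hmul {a b : PartExp} (ha : hMon (R := R) a ∈
      restrictSupport R (insert a {m | partLength a < partLength m})) (hb : hMon (R := R) b ∈
      restrictSupport R (insert b {m | partLength b < partLength m})) : hMon (R := R) (a + b) ∈
      restrictSupport R (insert (a + b) {m | partLength (a + b) < partLength m}) := by
    rw [hMon_add]
    refine mul_mem_restrictSupport (fun u hu v hv => ?_) ha hb
    simp only [Set.mem_insert_iff, Set.mem_ofPred_eq, map_add] at *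
    rcases hu with rfl | hu <;> rcases hv with rfl | hv <;> grind
  have hzero : hMon (R := R) 0 ∈
      restrictSupport R (insert 0 {m | partLength 0 < partLength m}) := by
    rw [hMon_zero, ← C_1, C_apply]
    exact (monomial_mem_restrictSupport R).mpr (.inl (Set.mem_insert _ _))
  induction ν using Finsupp.induction_linear with
  | zero => exact hzero
  | add f g hf hg => exact hmul hf hg
  | single k e =>
    induction e with
    | zero => rwa [Finsupp.single_zero]
    | succ e ih =>
      rw [Finsupp.single_add]
      refine hmul ih ?_
      rw [← onePart_coe, hMon_onePart]
      exact hsym_mem_restrictSupport k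

theorem partNumDvd_mapDomain (u : PartExp) :
    partNumDvd d (u.mapDomain (d * ·)) = partLength u := by
  induction u using Finsupp.induction_linear with
  | zero => simp
  | add f g hf hg => rw [Finsupp.mapDomain_add, map_add, map_add, hf, hg]
  | single k e =>
    rw [Finsupp.mapDomain_single, partNumDvd_single, partLength_single, PNat.mul_coe,
      if_pos (Dvd.intro _ rfl)]

theorem plethP_hMon_mem_restrictSupport (ν : PartExp) : plethP d (hMon (R := R) ν) ∈
    restrictSupport R (insert (ν.mapDomain (d * ·)) {m | partLength ν < partNumDvd d m}) := by
  classical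
  rw [mem_restrictSupport_iff, plethP_eq_rename,
    support_rename_of_injective (mul_right_injective d), Finset.coe_image]
  refine Set.image_subset_iff.mpr fun m hm => ?_
  rcases (mem_restrictSupport_iff R).mp (hMon_mem_restrictSupport ν) hm with rfl | hlt
  · exact Set.mem_insert _ _
  · exact .inr (hlt.trans_eq (partNumDvd_mapDomain m).symm)

theorem plethHMon_mem_restrictSupport (κ : PartExp) : plethHMon (R := R) d κ ∈
    restrictSupport R {m | partDepth d κ ≤ partNumDvd d m} := by
  refine mul_mem_restrictSupport (t := Set.univ) (fun a ha b _ => ?_)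
    (plethP_hMon_mem_restrictSupport _) ((mem_restrictSupport_iff R).mpr (Set.subset_univ _))
  rw [Set.mem_ofPred_eq, map_add, partDepth]
  rcases ha with rfl | ha
  · rw [partNumDvd_mapDomain]
    exact Nat.le_add_right _ _
  · exact Nat.le_add_right_of_le (le_of_lt ha)

end Support

theorem eq_zero_of_sum_plethHMon_mem_restrictSupport {R : Type} [Field R] [CharZero R] {d : ℕ+}
    {z : R} (hz : IsPrimitiveRoot z d) {j : ℕ} {s : Finset PartExp}
    (hs : ∀ κ ∈ s, partDepth d κ = j) {c : PartExp → R}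
    (h : ∑ κ ∈ s, c κ • plethHMon d κ ∈ restrictSupport R {m | j < partNumDvd d m}) :
    ∀ κ ∈ s, c κ = 0 := by
  have hli := linearIndependent_plethHMon hz
  have hhigh : restrictSupport R {m | j < partNumDvd d m} ≤
      Submodule.span R (plethHMon d '' {κ | j < partDepth d κ}) := by
    rw [restrictSupport_eq_span, Submodule.span_le]
    rintro _ ⟨m, hm, rfl⟩
    have hsub : {κ | partNumDvd d m ≤ partDepth d κ} ⊆ {κ | j < partDepth d κ} := fun κ hκ =>
      lt_of_lt_of_le (b := partNumDvd d m) hm hκ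
    exact Submodule.span_mono (Set.image_mono hsub) (monomial_mem_span_plethHMon hz m)
  have hlow : ∑ κ ∈ s, c κ • plethHMon d κ ∈ Submodule.span R (plethHMon (R := R) d '' ↑s) :=
    Submodule.sum_mem _ fun κ hκ => Submodule.smul_mem _ _ (Submodule.subset_span ⟨κ, hκ, rfl⟩)
  have hdisj : Disjoint (s : Set PartExp) {κ | j < partDepth d κ} :=
    Set.disjoint_left.mpr fun κ hκ h => (hs κ hκ).not_gt h
  exact linearIndependent_iff'.mp hli s c
    (Submodule.disjoint_def.mp (hli.disjoint_span_image hdisj) _ hlow (hhigh h))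

/-! ### Dominance order -/

theorem pSum_succ (nu : Multiset ℕ+) (k : ℕ) :
    pSum nu (k + 1) = pSum nu k + (descParts nu).getD k 0 := by
  rw [pSum, pSum]
  rcases lt_or_ge k (descParts nu).length with hk | hk
  · rw [List.sum_take_succ _ _ hk, List.getD_eq_getElem _ _ hk]
  · rw [List.take_of_length_le hk, List.take_of_length_le (Nat.le_succ_of_le hk),
      List.getD_eq_default _ _ hk, add_zero]

theorem sum_descParts (nu : Multiset ℕ+) : (descParts nu).sum = wt nu := by
  rw [← Multiset.sum_coe, coe_descParts, wt]

theorem pSum_le_wt (nu : Multiset ℕ+) (k : ℕ) : pSum nu k ≤ wt nu :=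
  ((List.take_sublist k _).sum_le_sum fun _ _ => Nat.zero_le _).trans_eq (sum_descParts nu)

theorem pSum_card (nu : Multiset ℕ+) : pSum nu (Multiset.card nu) = wt nu := by
  rw [pSum, ← length_descParts, List.take_length, sum_descParts]

theorem pSum_injective : Function.Injective pSum := fun mu nu h => by
  refine Multiset.toFinsupp.injective ?_
  rw [toFinsupp_eq_partsOf mu (le_max_left _ (Multiset.card nu)),
    toFinsupp_eq_partsOf nu (le_max_right (Multiset.card mu) _)]
  congr 1
  ext1 i
  have hi := pSum_succ mu i
  rw [h, pSum_succ] at hi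
  exact (Nat.add_left_cancel hi).symm

instance StrictDom.isStrictOrder : IsStrictOrder (Multiset ℕ+) StrictDom where
  irrefl _ h := h.1 rfl
  trans mu nu rho h h' := by
    refine ⟨?_, h.2.1.trans h'.2.1, fun k => (h.2.2 k).trans (h'.2.2 k)⟩
    rintro rfl
    exact h.1 (pSum_injective (funext fun k => le_antisymm (h.2.2 k) (h'.2.2 k)))

theorem finite_wt_eq (n : ℕ) : {nu : Multiset ℕ+ | wt nu = n}.Finite := by
  refine ((finite_partSize_le n).preimage Multiset.toFinsupp.injective.injOn).subset fun nu h => ?_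
  exact ((partSize_toFinsupp nu).trans h).le

theorem StrictDom.card_le {mu nu : Multiset ℕ+} (h : StrictDom mu nu) :
    Multiset.card nu ≤ Multiset.card mu := by
  by_contra! hlt
  have hsucc := pSum_succ nu (Multiset.card mu)
  have hle := h.2.2 (Multiset.card mu)
  rw [pSum_card, h.2.1] at hle
  have hpos := getD_descParts_pos nu hlt
  have hwt := pSum_le_wt nu (Multiset.card mu + 1)
  omega

theorem wt_replicate (l : ℕ) (r : ℕ+) : wt (Multiset.replicate l r) = l * r := by
  simp [wt]

theorem toFinsupp_replicate (l : ℕ) (r : ℕ+) :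
    Multiset.toFinsupp (Multiset.replicate l r) = Finsupp.single r l := by
  rw [← Multiset.nsmul_singleton, map_nsmul, Multiset.toFinsupp_singleton, Finsupp.smul_single,
    smul_eq_mul, mul_one]

theorem StrictDom.lt_card_of_replicate {l : ℕ} {r : ℕ+} {nu : Multiset ℕ+}
    (h : StrictDom nu (Multiset.replicate l r)) : l < Multiset.card nu := by
  by_contra! hcard
  have hle (i : Fin l) : (descParts nu).getD i 0 ≤ r := by
    refine (getD_descParts_antitone nu (Nat.zero_le i)).trans ?_
    have hfirst := h.2.2 1
    rw [pSum_succ, pSum_succ, descParts_replicate,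
      List.getD_replicate _ (Fin.pos i)] at hfirst
    simpa [pSum] using hfirst
  have hsum : ∑ i : Fin l, (descParts nu).getD i 0 = ∑ _ : Fin l, (r : ℕ) := by
    rw [← partSize_partsOf, ← toFinsupp_eq_partsOf nu hcard, partSize_toFinsupp, h.2.1,
      wt_replicate]
    simp
  have heq := (Finset.sum_eq_sum_iff_of_le fun i _ => hle i).mp hsum
  refine h.1 (Multiset.toFinsupp.injective ?_)
  have hconst : (fun i : Fin l => (descParts nu).getD i 0) = fun _ => (r : ℕ) :=
    funext fun i => heq i (Finset.mem_univ i)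
  rw [toFinsupp_eq_partsOf nu hcard, hconst, partsOf_const, Fintype.card_fin, toFinsupp_replicate]

/-! ### Macdonald functions and the Hall form -/

theorem map_eq_zero_of_mem_span_image {R M ι : Type*} [CommSemiring R] [AddCommMonoid M]
    [Module R M] {φ : M →ₗ[R] R} {v : ι → M} {s : Set ι} (h : ∀ i ∈ s, φ (v i) = 0) {x : M}
    (hx : x ∈ Submodule.span R (v '' s)) : φ x = 0 :=
  LinearMap.eqOn_span (g := 0) (Set.forall_mem_image.mpr h) hx

section Macdonald

variable {R : Type} [Field R]

theorem diagForm_scaleHom (w : PartExp → R) (g : ℕ+ → R) (f f' : SymFn R) :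
    diagForm w (scaleHom g f) f' = diagForm (fun m => w m * m.prod fun k e => g k ^ e) f f' := by
  rw [diagForm_comm, diagForm_comm _ f, diagForm_eq_sum, diagForm_eq_sum]
  refine Finset.sum_congr rfl fun m _ => ?_
  rw [coeff_scaleHom]
  ring

theorem hallForm_scaleHom (q t : R) (f f' : SymFn R) :
    hallForm (scaleHom (fun k => (1 - q ^ (k : ℕ)) / (1 - t ^ (k : ℕ))) f) f' =
      innerQT q t f f' := by
  have h (m : PartExp) :
      zwtQT q t m = zwtH m * m.prod fun k e => ((1 - q ^ (k : ℕ)) / (1 - t ^ (k : ℕ))) ^ e := by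
    rw [zwtQT, zwtH, Finsupp.prod, Finset.prod_mul_distrib]
  rw [innerQT_eq_diagForm, hallForm, diagForm_scaleHom, funext h]

theorem scaleHom_injective {g : ℕ+ → R} (hg : ∀ k, g k ≠ 0) :
    Function.Injective (scaleHom g) := by
  refine (injective_iff_map_eq_zero _).mpr fun f hf => ?_
  ext m
  have hm := congrArg (coeff m) hf
  rw [coeff_scaleHom, coeff_zero] at hm
  exact (mul_eq_zero.mp hm).resolve_left
    (Finset.prod_ne_zero_iff.mpr fun k _ => pow_ne_zero _ (hg k))

variable {q t : R} {P : Multiset ℕ+ → SymFn R}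

theorem IsMacdonaldBasis.schur_mem_span (hP : IsMacdonaldBasis q t P) (nu : Multiset ℕ+) :
    schur nu ∈ Submodule.span R (P '' insert nu {mu | StrictDom mu nu}) := by
  refine ((finite_wt_eq (wt nu)).wellFoundedOn (r := StrictDom)).induction
    (P := fun nu => schur nu ∈ Submodule.span R (P '' insert nu {mu | StrictDom mu nu}))
    rfl fun nu hnu ih => ?_
  have hsub : P nu - schur nu ∈ Submodule.span R (P '' insert nu {mu | StrictDom mu nu}) := by
    refine Submodule.span_le.mpr ?_ (hP.1 nu)
    rintro _ ⟨mu, hmu, rfl⟩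
    refine Submodule.span_mono (Set.image_mono ?_) (ih mu (hmu.2.1.trans hnu) hmu)
    rintro rho (rfl | hrho)
    · exact Or.inr hmu
    · exact Or.inr (_root_.trans (r := StrictDom) hrho hmu)
  have hself := Submodule.subset_span (R := R)
    (Set.mem_image_of_mem P (Set.mem_insert nu {mu | StrictDom mu nu}))
  simpa using Submodule.sub_mem _ hself hsub

section CharZero

variable [CharZero R]

theorem linearIndependent_schur : LinearIndependent R (schur (R := R)) := by
  have h : LinearIndependent R fun m => schur (R := R) (Finsupp.toMultiset m) :=
    linearIndependent_of_hasLeadingHMon (fun _ => one_ne_zero)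
      fun m => by simpa using hasLeadingHMon_schur (R := R) (Finsupp.toMultiset m)
  simpa [Function.comp_def] using h.comp _ Multiset.toFinsupp.injective

theorem eq_zero_of_hallForm_schur_eq_zero {f : SymFn R}
    (h : ∀ nu, hallForm f (schur nu) = 0) : f = 0 := by
  have hmon (m : PartExp) : hallForm f (hMon m) = 0 :=
    map_eq_zero_of_mem_span_image (fun _ _ => h _)
      (hMon_mem_span_of_hasLeadingHMon (fun _ => one_ne_zero)
        (fun m => by simpa using hasLeadingHMon_schur (R := R) (Finsupp.toMultiset m)) m)
  ext m
  have hm : hallForm f (monomial m 1) = 0 :=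
    map_eq_zero_of_mem_span_image (fun m' _ => hmon m') (monomial_mem_span_hMon m)
  rw [hallForm, diagForm_monomial_right, one_mul] at hm
  simpa using (mul_eq_zero.mp hm).resolve_right (zwtH_ne_zero m)

theorem IsMacdonaldBasis.ne_zero (hP : IsMacdonaldBasis q t P) (lam : Multiset ℕ+) :
    P lam ≠ 0 := fun h => by
  have hmem := hP.1 lam
  rw [h, zero_sub, Submodule.neg_mem_iff] at hmem
  exact linearIndependent_schur.notMem_span_image (fun hself => hself.1 rfl) hmem

theorem IsMacdonaldBasis.innerQT_self_ne_zero (hP : IsMacdonaldBasis q t P)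
    (hq : ∀ k : ℕ+, 1 - q ^ (k : ℕ) ≠ 0) (ht : ∀ k : ℕ+, 1 - t ^ (k : ℕ) ≠ 0)
    (lam : Multiset ℕ+) : innerQT q t (P lam) (P lam) ≠ 0 := fun h0 => by
  have horth (mu : Multiset ℕ+) : innerQT q t (P lam) (P mu) = 0 := by
    obtain rfl | h := eq_or_ne lam mu
    exacts [h0, hP.2 _ _ h]
  refine hP.ne_zero lam (scaleHom_injective (fun k => div_ne_zero (hq k) (ht k)) ?_)
  rw [map_zero]
  refine eq_zero_of_hallForm_schur_eq_zero fun nu =>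
    map_eq_zero_of_mem_span_image (fun mu _ => ?_) (hP.schur_mem_span nu)
  rw [hallForm_scaleHom, horth]

theorem IsMacdonaldBasis.hallForm_Qprime (hP : IsMacdonaldBasis q t P)
    (hq : ∀ k : ℕ+, 1 - q ^ (k : ℕ) ≠ 0) (ht : ∀ k : ℕ+, 1 - t ^ (k : ℕ) ≠ 0)
    (lam mu : Multiset ℕ+) :
    hallForm (Qprime q t P lam) (P mu) = if lam = mu then 1 else 0 := by
  rw [Qprime, hallForm_scaleHom, Qfam, innerQT_eq_diagForm _ _ (_ • _), map_smul,
    LinearMap.smul_apply, ← innerQT_eq_diagForm, smul_eq_mul]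
  split_ifs with h
  · rw [← h, inv_mul_cancel₀ (hP.innerQT_self_ne_zero hq ht lam)]
  · rw [hP.2 _ _ h, mul_zero]

theorem IsMacdonaldBasis.hallForm_Qprime_schur_eq_zero (hP : IsMacdonaldBasis q t P)
    (hq : ∀ k : ℕ+, 1 - q ^ (k : ℕ) ≠ 0) (ht : ∀ k : ℕ+, 1 - t ^ (k : ℕ) ≠ 0)
    {lam nu : Multiset ℕ+} (h : lam ∉ insert nu {mu | StrictDom mu nu}) :
    hallForm (Qprime q t P lam) (schur nu) = 0 := by
  refine map_eq_zero_of_mem_span_image (fun mu hmu => ?_) (hP.schur_mem_span nu)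
  rw [hP.hallForm_Qprime hq ht, if_neg]
  rintro rfl
  exact h hmu

end CharZero

end Macdonald

/-! ### Homogeneity -/

section Homogeneity

variable {R : Type} [Field R]

theorem isWeightedHomogeneous_hsym (n : ℕ) :
    IsWeightedHomogeneous (fun k : ℕ+ => (k : ℕ)) (hsym (R := R) n) n := by
  induction n using Nat.strong_induction_on with
  | _ n ih =>
  rcases n with _ | n
  · rw [hsym_zero]
    exact isWeightedHomogeneous_one R _
  · rw [hsym]
    refine Submodule.smul_mem (weightedHomogeneousSubmodule R _ _) _
      (IsWeightedHomogeneous.sum _ _ _ fun i hi => ?_)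
    have hi' : i < n + 1 := Finset.mem_range.mp hi
    have h := (isWeightedHomogeneous_X R (fun k : ℕ+ => (k : ℕ)) ⟨i + 1, i.succ_pos⟩).mul
      (ih (n - i) (by omega))
    rwa [PNat.mk_coe, show i + 1 + (n - i) = n + 1 by omega] at h

theorem isWeightedHomogeneous_hMon (m : PartExp) :
    IsWeightedHomogeneous (fun k : ℕ+ => (k : ℕ)) (hMon (R := R) m) (partSize m) := by
  induction m using Finsupp.induction_linear with
  | zero =>
    rw [hMon_zero, map_zero]
    exact isWeightedHomogeneous_one R _
  | add f g hf hg =>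
    rw [hMon_add, map_add]
    exact hf.mul hg
  | single k e =>
    rw [hMon_single, partSize_single]
    exact (isWeightedHomogeneous_hsym _).pow e

theorem diagForm_eq_zero_of_isWeightedHomogeneous (w : PartExp → R) {a b : ℕ} (hab : a ≠ b)
    {f g : SymFn R} (hf : IsWeightedHomogeneous (fun k : ℕ+ => (k : ℕ)) f a)
    (hg : IsWeightedHomogeneous (fun k : ℕ+ => (k : ℕ)) g b) : diagForm w f g = 0 := by
  rw [diagForm_eq_sum]
  refine Finset.sum_eq_zero fun m hm => ?_
  have hm' := hf (mem_support_iff.mp hm)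
  rw [hg.coeff_eq_zero m (hm'.trans_ne hab), mul_zero, zero_mul]

theorem hallForm_hMon_schur_eq_zero_of_ne {m : PartExp} {nu : Multiset ℕ+}
    (h : partSize m ≠ wt nu) : hallForm (R := R) (hMon m) (schur nu) = 0 := by
  rw [← partSize_toFinsupp] at h
  refine map_eq_zero_of_mem_span_image (fun b hb => ?_) (hasLeadingHMon_schur nu).mem_span
  have hb' : partSize b = partSize (Multiset.toFinsupp nu) := by
    rcases hb with rfl | hb
    exacts [rfl, hb.1]
  exact diagForm_eq_zero_of_isWeightedHomogeneous _ (h.trans_eq hb'.symm)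
    (isWeightedHomogeneous_hMon m) (isWeightedHomogeneous_hMon b)

end Homogeneity

/-! ### Macdonald functions of rectangles -/

theorem finite_shortParts (n l : ℕ) :
    {κ : PartExp | partSize κ = n ∧ partLength κ ≤ l}.Finite :=
  (finite_partSize_le n).subset fun _ h => h.1.le

/-- The partitions of `n` with at most `l` parts. -/
def shortParts (n l : ℕ) : Finset PartExp := (finite_shortParts n l).toFinset

theorem mem_shortParts {n l : ℕ} {κ : PartExp} :
    κ ∈ shortParts n l ↔ partSize κ = n ∧ partLength κ ≤ l :=
  Set.Finite.mem_toFinset _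

theorem mem_shortParts_of_mem_insert_partsAbove {n l : ℕ} {κ m : PartExp}
    (hκ : κ ∈ shortParts n l) (hm : m ∈ insert κ (partsAbove κ)) : m ∈ shortParts n l := by
  rw [mem_shortParts] at hκ ⊢
  rcases hm with rfl | hm
  · exact hκ
  · exact ⟨hm.1.trans hκ.1, hm.2.1.trans hκ.2⟩

theorem single_mem_shortParts (l : ℕ) (r : ℕ+) :
    Finsupp.single r l ∈ shortParts (l * r) l :=
  mem_shortParts.mpr ⟨partSize_single r l, (partLength_single r l).le⟩

theorem two_mul_mul_partSize_le (r : ℕ) (κ : PartExp) :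
    2 * r * partSize κ ≤ partSumSq κ + r ^ 2 * partLength κ := by
  induction κ using Finsupp.induction_linear with
  | zero => simp
  | add f g hf hg => simp only [map_add]; linarith
  | single k e =>
    rw [partSize_single, partSumSq_single, partLength_single]
    have h : 2 * r * (k : ℕ) ≤ (k : ℕ) ^ 2 + r ^ 2 := by
      rw [add_comm]
      exact two_mul_le_add_sq r (k : ℕ)
    nlinarith

theorem single_notMem_partsAbove {l : ℕ} {r : ℕ+} {κ : PartExp} (hκ : κ ∈ shortParts (l * r) l) :
    Finsupp.single r l ∉ partsAbove κ := fun h => by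
  rw [mem_shortParts] at hκ
  have hlt := h.2.2
  have hle := two_mul_mul_partSize_le r κ
  rw [partSumSq_single] at hlt
  rw [hκ.1] at hle
  nlinarith [Nat.mul_le_mul_left ((r : ℕ) ^ 2) hκ.2]

section Rectangle

variable {R : Type} [Field R] [CharZero R]

/-- The span `V` of the short products `h_m` is orthogonal to the long Schur functions. Pairing with
the short Schur functions is injective on the space `W` of symmetric functions having nonzero
pairings with these only, so `dim W ≤ dim V`. -/
theorem mem_span_hMon_shortParts {n l : ℕ} {f : SymFn R}
    (hf : ∀ nu, Multiset.toFinsupp nu ∉ shortParts n l → hallForm f (schur nu) = 0) :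
    f ∈ Submodule.span R (hMon '' (shortParts n l : Set PartExp)) := by
  let s : shortParts n l → SymFn R := fun m => schur (Finsupp.toMultiset m.1)
  let W : Submodule R (SymFn R) := ⨅ nu, ⨅ _ : Multiset.toFinsupp nu ∉ shortParts n l,
    LinearMap.ker (hallForm.flip (schur nu))
  have mem_W {g : SymFn R} : g ∈ W ↔
      ∀ nu, Multiset.toFinsupp nu ∉ shortParts n l → hallForm g (schur nu) = 0 := by
    simp [W]
  let T : W →ₗ[R] shortParts n l → R :=
    (LinearMap.pi fun m => hallForm.flip (s m)) ∘ₗ W.subtype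
  have hT : Function.Injective T := by
    refine (injective_iff_map_eq_zero T).mpr fun g hg => Subtype.ext ?_
    refine eq_zero_of_hallForm_schur_eq_zero fun nu => ?_
    by_cases hnu : Multiset.toFinsupp nu ∈ shortParts n l
    · simpa [T, s] using congrFun hg ⟨_, hnu⟩
    · exact mem_W.mp g.2 nu hnu
  have hVW : Submodule.span R (hMon '' (shortParts n l : Set PartExp)) ≤ W := by
    rw [Submodule.span_le]
    rintro _ ⟨m, hm, rfl⟩
    obtain ⟨hm, hl⟩ := mem_shortParts.mp hm
    refine mem_W.mpr fun nu hnu => ?_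
    rw [mem_shortParts, partSize_toFinsupp, partLength_toFinsupp, not_and_or, not_le] at hnu
    rcases hnu with hnu | hnu
    · exact hallForm_hMon_schur_eq_zero_of_ne (hm.trans_ne (Ne.symm hnu))
    · exact hallForm_hMon_schur_eq_zero hnu hl
  have hfin : Module.Finite R W := Module.Finite.of_injective T hT
  have hdim : Module.finrank R W ≤
      Module.finrank R (Submodule.span R (hMon (R := R) '' (shortParts n l : Set PartExp))) := by
    refine (LinearMap.finrank_le_finrank_of_injective hT).trans ?_
    have hli := (linearIndependent_of_hasLeadingHMon (fun _ => one_ne_zero)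
      (hasLeadingHMon_hMon (R := R))).comp (Subtype.val : shortParts n l → PartExp)
      Subtype.val_injective
    rw [Set.image_eq_range]
    exact (Module.finrank_fintype_fun_eq_card R).trans_le (finrank_span_eq_card hli).ge
  rw [Submodule.eq_of_le_of_finrank_le hVW hdim]
  exact mem_W.mpr hf

end Rectangle

section Rectangle

variable {R : Type} [Field R]

theorem hallForm_scaleHom_comm (g : ℕ+ → R) (f f' : SymFn R) :
    hallForm (scaleHom g f) f' = hallForm f (scaleHom g f') := by
  rw [hallForm, diagForm_comm _ f, diagForm_scaleHom, diagForm_scaleHom, diagForm_comm]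

theorem scaleHom_scaleHom {g g' : ℕ+ → R} (h : ∀ k, g k * g' k = 1) (f : SymFn R) :
    scaleHom g (scaleHom g' f) = f := by
  ext m
  rw [coeff_scaleHom, coeff_scaleHom, ← mul_assoc, Finsupp.prod, Finsupp.prod,
    ← Finset.prod_mul_distrib, Finset.prod_eq_one, one_mul]
  exact fun k _ => by rw [← mul_pow, h, one_pow]

theorem hallForm_scaleHom_Qprime_eq_zero {q t : R} {P : Multiset ℕ+ → SymFn R}
    (hq : ∀ k : ℕ+, 1 - q ^ (k : ℕ) ≠ 0) (ht : ∀ k : ℕ+, 1 - t ^ (k : ℕ) ≠ 0)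
    {f : SymFn R} {lam : Multiset ℕ+} (h : hallForm f (P lam) = 0) :
    hallForm (scaleHom (fun k => (1 - t ^ (k : ℕ)) / (1 - q ^ (k : ℕ))) f)
      (Qprime q t P lam) = 0 := by
  rw [hallForm_scaleHom_comm, Qprime, scaleHom_scaleHom, Qfam, map_smul, h, smul_zero]
  exact fun k => (div_mul_div_cancel₀ (hq k)).trans (div_self (ht k))

variable [CharZero R] {q t z : R} {P : Multiset ℕ+ → SymFn R} {d r : ℕ+} {l : ℕ}

theorem IsMacdonaldBasis.hallForm_hMon_replicate (hP : IsMacdonaldBasis q t P) {m : PartExp}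
    (hm : partLength m ≤ l) : hallForm (hMon m) (P (Multiset.replicate l r)) =
      if m = Finsupp.single r l then 1 else 0 := by
  have hlow : hallForm (hMon m) (P (.replicate l r) - schur (.replicate l r)) = 0 :=
    map_eq_zero_of_mem_span_image
      (fun _ hnu => hallForm_hMon_schur_eq_zero (StrictDom.lt_card_of_replicate hnu) hm) (hP.1 _)
  rw [map_sub, sub_eq_zero] at hlow
  rw [hlow, hallForm_hMon_schur_replicate r hm]

theorem IsMacdonaldBasis.hallForm_plethHMon_replicate (hP : IsMacdonaldBasis q t P)
    (hz : IsPrimitiveRoot z d) {κ : PartExp} (hκ : κ ∈ shortParts (l * r) l) :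
    hallForm (plethHMon d κ) (P (Multiset.replicate l r)) =
      if κ = Finsupp.single r l then (-1 : R) ^ (partSize (partQuo d κ) * (d - 1) : ℕ) else 0 := by
  have hlen := (mem_shortParts.mp hκ).2
  have hhigh := map_eq_zero_of_mem_span_image (φ := hallForm.flip (P (.replicate l r)))
    (fun m hm => by
      rw [LinearMap.flip_apply, hP.hallForm_hMon_replicate (hm.2.1.trans hlen), if_neg]
      rintro rfl
      exact single_notMem_partsAbove hκ hm) (hasLeadingHMon_plethHMon hz κ)
  rw [map_sub, sub_eq_zero, LinearMap.flip_apply, map_smul, LinearMap.flip_apply,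
    hP.hallForm_hMon_replicate hlen] at hhigh
  simpa using hhigh

theorem IsMacdonaldBasis.Qprime_replicate_mem_span (hP : IsMacdonaldBasis q t P)
    (hq : ∀ k : ℕ+, 1 - q ^ (k : ℕ) ≠ 0) (ht : ∀ k : ℕ+, 1 - t ^ (k : ℕ) ≠ 0)
    (hz : IsPrimitiveRoot z d) : Qprime q t P (Multiset.replicate l r) ∈
      Submodule.span R (plethHMon d '' (shortParts (l * r) l : Set PartExp)) := by
  have hspan : Qprime q t P (.replicate l r) ∈
      Submodule.span R (hMon '' (shortParts (l * r) l : Set PartExp)) := by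
    refine mem_span_hMon_shortParts fun nu hnu => hP.hallForm_Qprime_schur_eq_zero hq ht ?_
    rintro (rfl | hdom)
    · exact hnu (toFinsupp_replicate l r ▸ single_mem_shortParts l r)
    · refine hnu (mem_shortParts.mpr ⟨?_, ?_⟩)
      · rw [partSize_toFinsupp, ← hdom.2.1, wt_replicate]
      · rw [partLength_toFinsupp, ← Multiset.card_replicate l r]
        exact hdom.card_le
  refine Submodule.span_le.mpr ?_ hspan
  rintro _ ⟨m, hm, rfl⟩
  exact Submodule.span_mono (Set.image_mono fun κ => mem_shortParts_of_mem_insert_partsAbove hm)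
    (hMon_mem_span_plethHMon hz m)

theorem IsMacdonaldBasis.exists_Qprime_replicate_eq_sum (hP : IsMacdonaldBasis q t P)
    (hq : ∀ k : ℕ+, 1 - q ^ (k : ℕ) ≠ 0) (ht : ∀ k : ℕ+, 1 - t ^ (k : ℕ) ≠ 0)
    (hz : IsPrimitiveRoot z d) : ∃ c : PartExp → R, c (Finsupp.single r l) =
        (-1 : R) ^ (partSize (partQuo d (Finsupp.single r l)) * (d - 1) : ℕ) ∧
      Qprime q t P (Multiset.replicate l r) = ∑ κ ∈ shortParts (l * r) l, c κ • plethHMon d κ := by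
  obtain ⟨c, hc⟩ := (Submodule.mem_span_image_finset_iff_exists_fun' R).mp
    (hP.Qprime_replicate_mem_span (r := r) (l := l) hq ht hz)
  refine ⟨c, ?_, hc.symm⟩
  have hone := hP.hallForm_Qprime hq ht (.replicate l r) (.replicate l r)
  rw [if_pos rfl, ← hc, map_sum, LinearMap.sum_apply, Finset.sum_eq_single_of_mem _
    (single_mem_shortParts l r)] at hone
  · rw [map_smul, LinearMap.smul_apply, hP.hallForm_plethHMon_replicate hz
      (single_mem_shortParts l r), if_pos rfl, smul_eq_mul] at hone
    rw [eq_div_of_mul_eq (pow_ne_zero _ (neg_ne_zero.mpr one_ne_zero)) hone, one_div, ← inv_pow,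
      inv_neg_one]
  · intro κ hκ hne
    rw [map_smul, LinearMap.smul_apply, hP.hallForm_plethHMon_replicate hz hκ, if_neg hne,
      smul_zero]

end Rectangle

/-! ### Specialization of rational functions -/

section EvalGraph

variable {K : Type*} [Field K] {c : K}

/-- The graph of evaluation at `c` on the rational functions regular at `c`. Working with the
graph avoids the junk values of `RatFunc.eval` at poles. -/
def evalGraph (c : K) : Subring (RatFunc K × K) :=
  Subsemiring.toSubring
    { carrier := {p | p.1.denom.eval₂ (RingHom.id K) c ≠ 0 ∧ p.1.eval (RingHom.id K) c = p.2}
      zero_mem' := by simp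
      one_mem' := by simp
      add_mem' := fun {p p'} hp hp' => by
        refine ⟨fun h0 => mul_ne_zero hp.1 hp'.1 ?_, ?_⟩
        · rw [← Polynomial.eval₂_mul]
          exact Polynomial.eval₂_eq_zero_of_dvd_of_eval₂_eq_zero _ _ (RatFunc.denom_add_dvd _ _) h0
        · rw [Prod.snd_add, ← hp.2, ← hp'.2]
          exact RatFunc.eval_add _ _ hp.1 hp'.1
      mul_mem' := fun {p p'} hp hp' => by
        refine ⟨fun h0 => mul_ne_zero hp.1 hp'.1 ?_, ?_⟩
        · rw [← Polynomial.eval₂_mul]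
          exact Polynomial.eval₂_eq_zero_of_dvd_of_eval₂_eq_zero _ _ (RatFunc.denom_mul_dvd _ _) h0
        · rw [Prod.snd_mul, ← hp.2, ← hp'.2]
          exact RatFunc.eval_mul _ _ hp.1 hp'.1 }
    (by
      have h : ((-1 : RatFunc K × K).1) = RatFunc.C (-1) := by simp
      exact ⟨by simp [h, -map_neg], by simp [h, -map_neg]⟩)

theorem eval_of_mem_evalGraph {x : RatFunc K} {y : K} (h : (x, y) ∈ evalGraph c) :
    x.eval (RingHom.id K) c = y := h.2

theorem algebraMap_mem_evalGraph (p : Polynomial K) :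
    (algebraMap (Polynomial K) (RatFunc K) p, p.eval c) ∈ evalGraph c :=
  ⟨by simp, by simp [RatFunc.eval_algebraMap, Polynomial.eval₂_id]⟩

theorem C_mem_evalGraph (a : K) : (RatFunc.C a, a) ∈ evalGraph c := by
  simpa using algebraMap_mem_evalGraph (c := c) (Polynomial.C a)

theorem X_mem_evalGraph : ((RatFunc.X : RatFunc K), c) ∈ evalGraph c := by
  simpa using algebraMap_mem_evalGraph (c := c) Polynomial.X

theorem ratCast_mem_evalGraph (a : ℚ) :
    ((a : RatFunc K), (a : K)) ∈ evalGraph c := by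
  simpa using C_mem_evalGraph (c := c) (a : K)

theorem ne_zero_of_mem_evalGraph {x : RatFunc K} {y : K} (h : (x, y) ∈ evalGraph c)
    (hy : y ≠ 0) : x ≠ 0 := by
  rintro rfl
  exact hy ((eval_of_mem_evalGraph h).symm.trans (RatFunc.eval_zero _ _))

theorem inv_mem_evalGraph {x : RatFunc K} {y : K} (h : (x, y) ∈ evalGraph c) (hy : y ≠ 0) :
    (x⁻¹, y⁻¹) ∈ evalGraph c := by
  have hx := ne_zero_of_mem_evalGraph h hy
  have hnum : x.num.eval₂ (RingHom.id K) c ≠ 0 := fun h0 =>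
    hy (by rw [← eval_of_mem_evalGraph h, RatFunc.eval, h0, zero_div])
  have hdenom : x⁻¹.denom.eval₂ (RingHom.id K) c ≠ 0 :=
    mt (Polynomial.eval₂_eq_zero_of_dvd_of_eval₂_eq_zero _ _ (RatFunc.denom_inv_dvd hx)) hnum
  refine ⟨hdenom, eq_inv_of_mul_eq_one_right ?_⟩
  have hmul := RatFunc.eval_mul (RingHom.id K) c h.1 hdenom
  rwa [mul_inv_cancel₀ hx, RatFunc.eval_one, eval_of_mem_evalGraph h, eq_comm] at hmul

theorem div_mem_evalGraph {x x' : RatFunc K} {y y' : K} (h : (x, y) ∈ evalGraph c)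
    (h' : (x', y') ∈ evalGraph c) (hy' : y' ≠ 0) : (x / x', y / y') ∈ evalGraph c := by
  rw [div_eq_mul_inv, div_eq_mul_inv, ← Prod.mk_mul_mk]
  exact mul_mem h (inv_mem_evalGraph h' hy')

end EvalGraph

section Matrix

variable {n : Type*} [Fintype n] [DecidableEq n]

theorem det_prod_mem {R S : Type*} [CommRing R] [CommRing S] {G : Subring (R × S)}
    {A : Matrix n n R} {B : Matrix n n S} (h : ∀ i j, (A i j, B i j) ∈ G) :
    (A.det, B.det) ∈ G := by
  let M : Matrix n n G := Matrix.of fun i j => ⟨(A i j, B i j), h i j⟩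
  have hM : (M.det : R × S) = (A.det, B.det) := Prod.ext
    (((RingHom.fst R S).comp G.subtype).map_det M) (((RingHom.snd R S).comp G.subtype).map_det M)
  exact hM ▸ M.det.2

theorem mem_evalGraph_zero_of_mulVec {K : Type*} [Field K] {c : K} {A : Matrix n n (RatFunc K)}
    {B : Matrix n n K} (hAB : ∀ i j, (A i j, B i j) ∈ evalGraph c) (hB : B.det ≠ 0)
    {x : n → RatFunc K} (hx : ∀ i, (A.mulVec x i, 0) ∈ evalGraph c) (i : n) :
    (x i, 0) ∈ evalGraph c := by
  have hdet := det_prod_mem hAB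
  have hcramer : (A.cramer (A.mulVec x) i, (B.updateCol i 0).det) ∈ evalGraph c := by
    rw [Matrix.cramer_apply]
    refine det_prod_mem fun j k => ?_
    rw [Matrix.updateCol_apply, Matrix.updateCol_apply]
    split_ifs
    exacts [hx j, hAB j k]
  have hzero : (B.updateCol i 0).det = 0 :=
    Matrix.det_eq_zero_of_column_eq_zero i fun j => Matrix.updateCol_self
  have hx' : x i = A.det⁻¹ * A.cramer (A.mulVec x) i := by
    rw [Matrix.cramer_eq_adjugate_mulVec, Matrix.mulVec_mulVec, Matrix.adjugate_mul,
      Matrix.smul_mulVec, Matrix.one_mulVec, Pi.smul_apply, smul_eq_mul,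
      inv_mul_cancel_left₀ (ne_zero_of_mem_evalGraph hdet hB)]
  have hmul := mul_mem (inv_mem_evalGraph hdet hB) hcramer
  rwa [Prod.mk_mul_mk, ← hx', hzero, mul_zero] at hmul

end Matrix

/-! ### The reduced Gram matrix -/

section ReducedForm

variable {R : Type} [Field R] {d : ℕ+}

/-- The diagonal form obtained from the Hall form by scaling `p_k` by `s * g k` if `d ∣ k` and by
`g k` otherwise, and dividing by `s ^ j`. Subtraction is truncated in the exponent of `s`, so only
the monomials with at least `j` variables of index divisible by `d` have the intended norm. -/
def reducedForm (d : ℕ+) (s : R) (g : ℕ+ → R) (j : ℕ) : SymFn R →ₗ[R] SymFn R →ₗ[R] R :=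
  diagForm fun μ => zwtH μ * (s ^ (partNumDvd d μ - j) * μ.prod fun k e => g k ^ e)

theorem prod_ite_mul_pow (s : R) (g : ℕ+ → R) (μ : PartExp) :
    (μ.prod fun k e => ((if (d : ℕ) ∣ k then s else 1) * g k) ^ e) =
      s ^ partNumDvd d μ * μ.prod fun k e => g k ^ e := by
  rw [partNumDvd, Finsupp.weight_apply, Finsupp.sum, ← Finset.prod_pow_eq_pow_sum, Finsupp.prod,
    Finsupp.prod, ← Finset.prod_mul_distrib]
  refine Finset.prod_congr rfl fun k _ => ?_
  split_ifs <;> simp [mul_pow]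

theorem hallForm_scaleHom_plethHMon {s : R} {g ω : ℕ+ → R}
    (hω : ∀ k, ω k = (if (d : ℕ) ∣ k then s else 1) * g k) (κ : PartExp) (f : SymFn R) :
    hallForm (scaleHom ω (plethHMon d κ)) f =
      s ^ partDepth d κ * reducedForm d s g (partDepth d κ) (plethHMon d κ) f := by
  rw [hallForm, diagForm_scaleHom, reducedForm, diagForm_eq_sum, diagForm_eq_sum, Finset.mul_sum,
    funext hω]
  refine Finset.sum_congr rfl fun μ hμ => ?_
  have hle : partDepth d κ ≤ partNumDvd d μ :=
    (mem_restrictSupport_iff R).mp (plethHMon_mem_restrictSupport κ) hμ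
  rw [prod_ite_mul_pow, ← Nat.add_sub_cancel' hle, pow_add, Nat.add_sub_cancel_left]
  ring

theorem reducedForm_zero_eq_zero (g : ℕ+ → R) (j : ℕ) (f : SymFn R) {f' : SymFn R}
    (hf' : f' ∈ restrictSupport R {μ | j < partNumDvd d μ}) : reducedForm d 0 g j f f' = 0 := by
  rw [reducedForm, diagForm_comm, diagForm_eq_sum]
  refine Finset.sum_eq_zero fun μ hμ => ?_
  have hlt : j < partNumDvd d μ := (mem_restrictSupport_iff R).mp hf' hμ
  rw [zero_pow (Nat.sub_ne_zero_of_lt hlt), zero_mul, mul_zero, mul_zero]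

theorem mul_partDepth_add_partLength (κ : PartExp) :
    d * partDepth d κ + partLength (partRem d κ) = partLength κ := by
  conv_rhs => rw [← smul_partQuo_add_partRem d κ, map_add, map_nsmul, smul_eq_mul]
  rw [partDepth]

theorem smul_partQuo_eq_self {κ : PartExp} (hκ : partLength κ ≤ d * partDepth d κ) :
    (d : ℕ) • partQuo d κ = κ := by
  have hlen : partLength (partRem d κ) = 0 := by
    have := mul_partDepth_add_partLength (d := d) κ
    omega
  have hrem : partRem d κ = 0 := by
    have := Finsupp.nonTorsionWeight_of ℕ (w := fun _ : ℕ+ => 1) fun _ => one_ne_zero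
    exact (Finsupp.weight_eq_zero_iff_eq_zero _).mp hlen
  conv_rhs => rw [← smul_partQuo_add_partRem d κ, hrem, add_zero]

theorem partDepth_lt_of_mem_support_plethHMon_single {m : ℕ} {r : ℕ+} {κ μ : PartExp}
    (hκ : partLength κ ≤ d * m) (hne : κ ≠ Finsupp.single r (d * m))
    (hμκ : μ ∈ (plethHMon (R := R) d κ).support)
    (hμ : μ ∈ (plethHMon (R := R) d (Finsupp.single r (d * m))).support) :
    partDepth d κ < partNumDvd d μ := by
  rw [← smul_eq_mul, ← Finsupp.smul_single] at hne hμ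
  rw [plethHMon_smul] at hμ
  have hle : partDepth d κ ≤ m := Nat.le_of_mul_le_mul_left
    ((Nat.le_add_right _ _).trans_eq (mul_partDepth_add_partLength κ) |>.trans hκ) d.pos
  rcases (mem_restrictSupport_iff R).mp (plethP_hMon_mem_restrictSupport _) hμ with rfl | hlt
  · rw [partNumDvd_mapDomain, partLength_single]
    refine hle.lt_of_ne fun hdepth => hne ?_
    have hself : (d : ℕ) • partQuo d κ = κ := smul_partQuo_eq_self (hdepth.symm ▸ hκ)
    rw [← hself, plethHMon_smul] at hμκ
    rcases (mem_restrictSupport_iff R).mp (plethP_hMon_mem_restrictSupport _) hμκ with heq | hlt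
    · rw [← hself, Finsupp.mapDomain_injective (mul_right_injective d) heq]
    · rw [Set.mem_ofPred_eq, partNumDvd_mapDomain, partLength_single] at hlt
      exact absurd hdepth hlt.ne
  · rw [Set.mem_ofPred_eq, partLength_single] at hlt
    exact hle.trans_lt hlt

theorem reducedForm_plethHMon_single_eq_zero (g : ℕ+ → R) {m : ℕ} {r : ℕ+} {κ : PartExp}
    (hκ : partLength κ ≤ d * m) (hne : κ ≠ Finsupp.single r (d * m)) :
    reducedForm d 0 g (partDepth d κ) (plethHMon d κ)
      (plethHMon d (Finsupp.single r (d * m))) = 0 := by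
  rw [reducedForm, diagForm_eq_sum]
  refine Finset.sum_eq_zero fun μ hμκ => ?_
  by_cases hμ : μ ∈ (plethHMon (R := R) d (Finsupp.single r (d * m))).support
  · have hlt := partDepth_lt_of_mem_support_plethHMon_single hκ hne hμκ hμ
    rw [zero_pow (Nat.sub_ne_zero_of_lt hlt), zero_mul, mul_zero, mul_zero]
  · rw [notMem_support_iff.mp hμ, mul_zero, zero_mul]

theorem zwtH_pos (μ : PartExp) : 0 < zwtH (R := ℚ) μ :=
  Finset.prod_pos fun k _ => by positivity

theorem mem_restrictSupport_of_reducedForm_self {j : ℕ} {f : SymFn ℚ}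
    (hf : f ∈ restrictSupport ℚ {μ | j ≤ partNumDvd d μ}) (h : reducedForm d 0 1 j f f = 0) :
    f ∈ restrictSupport ℚ {μ | j < partNumDvd d μ} := by
  rw [reducedForm, diagForm_eq_sum, Finset.sum_eq_zero_iff_of_nonneg] at h
  · refine (mem_restrictSupport_iff ℚ).mpr fun μ hμ => ?_
    have hle : j ≤ partNumDvd d μ := (mem_restrictSupport_iff ℚ).mp hf hμ
    refine hle.lt_of_ne fun heq => ?_
    have hμ0 := h μ hμ
    simp [← heq, (zwtH_pos μ).ne', mem_support_iff.mp hμ] at hμ0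
  · intro μ _
    have hz := zwtH_pos μ
    have hpow : (0 : ℚ) ≤ 0 ^ (partNumDvd d μ - j) := pow_nonneg le_rfl _
    simp only [Pi.one_apply, one_pow, Finsupp.prod, Finset.prod_const_one, mul_one]
    exact mul_nonneg (mul_self_nonneg _) (mul_nonneg hz.le hpow)

end ReducedForm

section Map

variable {R R' : Type} [Field R] [Field R'] {d : ℕ+} (φ : R →+* R')

theorem diagForm_map (w : PartExp → R') (f f' : SymFn R) : diagForm w (map φ f) (map φ f') =
    ∑ μ ∈ f.support, φ (coeff μ f * coeff μ f') * w μ := by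
  rw [diagForm_eq_sum, support_map_of_injective _ φ.injective]
  simp only [coeff_map, map_mul]

variable [CharZero R] [CharZero R']

theorem map_hMon (m : PartExp) : map φ (hMon m) = hMon m := by
  simp only [hMon, Finsupp.prod, map_prod, map_pow, map_hsym]

theorem map_plethHMon (κ : PartExp) : map φ (plethHMon d κ) = plethHMon d κ := by
  rw [plethHMon, map_mul, plethP_eq_rename, map_rename, map_hMon, map_hMon, ← plethP_eq_rename,
    plethHMon]

theorem reducedForm_plethHMon_eq_sum (s : R) (g : ℕ+ → R) (j : ℕ) (κ κ' : PartExp) :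
    reducedForm d s g j (plethHMon d κ) (plethHMon d κ') =
      ∑ μ ∈ (plethHMon (R := ℚ) d κ).support,
        ((coeff μ (plethHMon (R := ℚ) d κ) * coeff μ (plethHMon d κ') * zwtH μ : ℚ) : R) *
          (s ^ (partNumDvd d μ - j) * μ.prod fun k e => g k ^ e) := by
  have hz (μ : PartExp) : zwtH μ = algebraMap ℚ R (zwtH μ) := by
    simp [zwtH]
  rw [← map_plethHMon (algebraMap ℚ R) κ, ← map_plethHMon (algebraMap ℚ R) κ', reducedForm,
    diagForm_map]
  refine Finset.sum_congr rfl fun μ _ => ?_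
  rw [hz, ← mul_assoc, ← map_mul, eq_ratCast]

theorem map_reducedForm_plethHMon (s : R) (g : ℕ+ → R) (j : ℕ) (κ κ' : PartExp) :
    φ (reducedForm d s g j (plethHMon d κ) (plethHMon d κ')) =
      reducedForm d (φ s) (φ ∘ g) j (plethHMon d κ) (plethHMon d κ') := by
  simp only [reducedForm_plethHMon_eq_sum, map_sum, map_mul, map_ratCast, map_pow, Finsupp.prod,
    map_prod, Function.comp_apply]

end Map

theorem reducedForm_plethHMon_mem_evalGraph {K : Type} [Field K] [CharZero K] {c : K} {d : ℕ+}
    {s : RatFunc K} {g : ℕ+ → RatFunc K} {s' : K} {g' : ℕ+ → K} (hs : (s, s') ∈ evalGraph c)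
    (hg : ∀ k, (g k, g' k) ∈ evalGraph c) (j : ℕ) (κ κ' : PartExp) :
    (reducedForm d s g j (plethHMon d κ) (plethHMon d κ'),
      reducedForm d s' g' j (plethHMon d κ) (plethHMon d κ')) ∈ evalGraph c := by
  have hterm (μ : PartExp) :
      (s ^ (partNumDvd d μ - j) * μ.prod fun k e => g k ^ e,
        s' ^ (partNumDvd d μ - j) * μ.prod fun k e => g' k ^ e) ∈ evalGraph c := by
    have hprod := prod_mem (t := μ.support) fun k _ => pow_mem (hg k) (μ k)
    simp only [Prod.pow_mk, ← prod_mk_prod] at hprod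
    exact mul_mem (pow_mem hs _) hprod
  have hsum := sum_mem (t := (plethHMon (R := ℚ) d κ).support) fun μ _ =>
    mul_mem (ratCast_mem_evalGraph (c := c)
      (coeff μ (plethHMon (R := ℚ) d κ) * coeff μ (plethHMon d κ') * zwtH μ)) (hterm μ)
  rw [reducedForm_plethHMon_eq_sum, reducedForm_plethHMon_eq_sum]
  simpa only [Prod.mk_mul_mk, ← prod_mk_sum] using hsum

section RationalGram

variable {d : ℕ+}

theorem eq_zero_of_sum_plethHMon_mem_restrictSupport_rat {j : ℕ} {s : Finset PartExp}
    (hs : ∀ κ ∈ s, partDepth d κ = j) {c : PartExp → ℚ}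
    (h : ∑ κ ∈ s, c κ • plethHMon d κ ∈ restrictSupport ℚ {m | j < partNumDvd d m}) :
    ∀ κ ∈ s, c κ = 0 := by
  have hmap : ∑ κ ∈ s, (c κ : ℂ) • plethHMon d κ =
      map (algebraMap ℚ ℂ) (∑ κ ∈ s, c κ • plethHMon d κ) := by
    simp only [map_sum, smul_eq_C_mul, map_mul, map_C, map_plethHMon, eq_ratCast]
  have hmem : ∑ κ ∈ s, (c κ : ℂ) • plethHMon d κ ∈
      restrictSupport ℂ {m | j < partNumDvd d m} := by
    rw [mem_restrictSupport_iff] at h ⊢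
    rw [hmap, support_map_of_injective _ (algebraMap ℚ ℂ).injective]
    exact h
  have hzero := eq_zero_of_sum_plethHMon_mem_restrictSupport
    (Complex.isPrimitiveRoot_exp d d.ne_zero) hs hmem
  exact fun κ hκ => Rat.cast_eq_zero.mp (hzero κ hκ)

/-- Over `ℚ` the reduced form is positive definite on each depth layer, and lower layers are
orthogonal to higher ones; this is why the reduced Gram matrix is invertible. -/
theorem eq_zero_of_reducedForm_sum_eq_zero {J : Finset PartExp} {c : PartExp → ℚ}
    (h : ∀ κ ∈ J, reducedForm d 0 1 (partDepth d κ) (plethHMon d κ)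
      (∑ κ' ∈ J, c κ' • plethHMon d κ') = (0 : ℚ)) : ∀ κ ∈ J, c κ = 0 := by
  suffices hdepth : ∀ j, ∀ κ ∈ J.filter (partDepth d · = j), c κ = 0 from
    fun κ hκ => hdepth _ κ (Finset.mem_filter.mpr ⟨hκ, rfl⟩)
  intro j
  induction j using Nat.strong_induction_on with
  | _ j ih =>
    set S := J.filter (partDepth d · = j)
    have hS : ∀ κ ∈ S, partDepth d κ = j := fun κ hκ => (Finset.mem_filter.mp hκ).2
    set F : SymFn ℚ := ∑ κ ∈ S, c κ • plethHMon d κ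
    have hrest : ∑ κ ∈ J with ¬partDepth d κ = j, c κ • plethHMon d κ ∈
        restrictSupport ℚ {m | j < partNumDvd d m} := by
      refine Submodule.sum_mem _ fun κ hκ => ?_
      obtain ⟨hκJ, hne⟩ := Finset.mem_filter.mp hκ
      rcases lt_or_gt_of_ne hne with hlt | hgt
      · rw [ih _ hlt κ (Finset.mem_filter.mpr ⟨hκJ, rfl⟩), zero_smul]
        exact Submodule.zero_mem _
      · exact Submodule.smul_mem _ _ (restrictSupport_mono ℚ
          (fun m (hm : _ ≤ _) => lt_of_lt_of_le hgt hm) (plethHMon_mem_restrictSupport κ))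
    have horth : ∀ κ ∈ S, reducedForm d 0 1 j (plethHMon d κ) F = (0 : ℚ) := fun κ hκ => by
      have hsum := h κ (Finset.mem_filter.mp hκ).1
      rwa [← Finset.sum_filter_add_sum_filter_not J (partDepth d · = j), map_add, hS κ hκ,
        reducedForm_zero_eq_zero 1 j _ hrest, add_zero] at hsum
    have hself : F ∈ LinearMap.ker ((reducedForm d 0 1 j).flip F) :=
      Submodule.sum_mem _ fun κ hκ => Submodule.smul_mem _ _ (horth κ hκ)
    have hmem : F ∈ restrictSupport ℚ {m | j ≤ partNumDvd d m} :=
      Submodule.sum_mem _ fun κ hκ => Submodule.smul_mem _ _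
        (hS κ hκ ▸ plethHMon_mem_restrictSupport κ)
    exact eq_zero_of_sum_plethHMon_mem_restrictSupport_rat hS
      (mem_restrictSupport_of_reducedForm_self hmem hself)

/-- The Gram matrix of the functions `plethHMon d κ`, with row `κ` divided by
`s ^ partDepth d κ`. -/
def reducedGram {R : Type} [Field R] (d : ℕ+) (s : R) (g : ℕ+ → R) (J : Finset PartExp) :
    Matrix J J R :=
  Matrix.of fun κ κ' => reducedForm d s g (partDepth d κ) (plethHMon d κ) (plethHMon d κ')

theorem reducedGram_mulVec {R : Type} [Field R] (s : R) (g : ℕ+ → R) (J : Finset PartExp)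
    (c : PartExp → R) (κ : J) : (reducedGram d s g J).mulVec (fun κ' => c κ') κ =
      reducedForm d s g (partDepth d κ) (plethHMon d κ) (∑ κ' ∈ J, c κ' • plethHMon d κ') := by
  rw [map_sum, ← Finset.sum_coe_sort J]
  refine Finset.sum_congr rfl fun κ' _ => ?_
  rw [map_smul, smul_eq_mul, mul_comm]
  rfl

theorem det_reducedGram_rat_ne_zero (J : Finset PartExp) :
    (reducedGram d (0 : ℚ) 1 J).det ≠ 0 := by
  refine mt Matrix.exists_mulVec_eq_zero_iff.mpr ?_
  rintro ⟨v, hv, hzero⟩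
  refine hv (funext fun κ => ?_)
  obtain ⟨c, hc⟩ : ∃ c : PartExp → ℚ, (fun κ : J => c κ) = v :=
    ⟨Function.extend Subtype.val v 0, funext (Subtype.val_injective.extend_apply v 0)⟩
  rw [← hc] at hzero ⊢
  exact eq_zero_of_reducedForm_sum_eq_zero
    (fun κ hκ => (reducedGram_mulVec 0 1 J c ⟨κ, hκ⟩).symm.trans (congrFun hzero ⟨κ, hκ⟩)) κ κ.2

end RationalGram

theorem map_reducedGram {R R' : Type} [Field R] [CharZero R] [Field R'] [CharZero R'] {d : ℕ+}
    (φ : R →+* R') (s : R) (g : ℕ+ → R) (J : Finset PartExp) :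
    φ.mapMatrix (reducedGram d s g J) = reducedGram d (φ s) (φ ∘ g) J :=
  Matrix.ext fun κ κ' => map_reducedForm_plethHMon φ s g (partDepth d κ) κ κ'

section DeformationFactors

variable {R : Type} [CommRing R]

/-- The quotient of `1 - x ^ k` by `1 - x ^ d` if `d ∣ k`, and `1 - x ^ k` otherwise. -/
def oneSubPowQuot (d k : ℕ+) (x : R) : R :=
  if (d : ℕ) ∣ k then ∑ i ∈ Finset.range (k / d : ℕ), (x ^ (d : ℕ)) ^ i else 1 - x ^ (k : ℕ)

theorem mul_oneSubPowQuot (d k : ℕ+) (x : R) :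
    (if (d : ℕ) ∣ k then 1 - x ^ (d : ℕ) else 1) * oneSubPowQuot d k x = 1 - x ^ (k : ℕ) := by
  rw [oneSubPowQuot]
  split_ifs with hdk
  · rw [mul_neg_geom_sum, ← pow_mul, Nat.mul_div_cancel' hdk]
  · rw [one_mul]

theorem oneSubPowQuot_ne_zero {d k : ℕ+} {x : R} (hk : 1 - x ^ (k : ℕ) ≠ 0) :
    oneSubPowQuot d k x ≠ 0 :=
  right_ne_zero_of_mul (mul_oneSubPowQuot d k x ▸ hk)

theorem map_oneSubPowQuot {R' : Type} [CommRing R'] (φ : R →+* R') (d k : ℕ+) (x : R) :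
    φ (oneSubPowQuot d k x) = oneSubPowQuot d k (φ x) := by
  rw [oneSubPowQuot, oneSubPowQuot]
  split_ifs <;> simp

theorem oneSubPowQuot_ne_zero_of_isPrimitiveRoot [CharZero R] {d : ℕ+} {z : R}
    (hz : IsPrimitiveRoot z d) (k : ℕ+) : oneSubPowQuot d k z ≠ 0 := by
  rw [oneSubPowQuot]
  split_ifs with hdk
  · have hpos : (k / d : ℕ) ≠ 0 := (Nat.div_pos (Nat.le_of_dvd k.pos hdk) d.pos).ne'
    simpa [hz.pow_eq_one] using hpos
  · exact fun h => hdk ((hz.pow_eq_one_iff_dvd k).mp (sub_eq_zero.mp h).symm)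

theorem oneSubPowQuot_mem_evalGraph {K : Type} [Field K] {c : K} {x : RatFunc K} {y : K}
    (h : (x, y) ∈ evalGraph c) (d k : ℕ+) :
    (oneSubPowQuot d k x, oneSubPowQuot d k y) ∈ evalGraph c := by
  have hprod : oneSubPowQuot d k (x, y) = (oneSubPowQuot d k x, oneSubPowQuot d k y) :=
    Prod.ext (map_oneSubPowQuot (RingHom.fst (RatFunc K) K) d k (x, y))
      (map_oneSubPowQuot (RingHom.snd (RatFunc K) K) d k (x, y))
  have hsub := map_oneSubPowQuot (evalGraph c).subtype d k ⟨(x, y), h⟩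
  exact hprod ▸ hsub ▸ SetLike.coe_mem _

end DeformationFactors

theorem IsMacdonaldBasis.reducedForm_Qprime_replicate_eq_zero {R : Type} [Field R] [CharZero R]
    {q t z : R} {P : Multiset ℕ+ → SymFn R} {d r : ℕ+} {l : ℕ} (hP : IsMacdonaldBasis q t P)
    (hq : ∀ k : ℕ+, 1 - q ^ (k : ℕ) ≠ 0) (ht : ∀ k : ℕ+, 1 - t ^ (k : ℕ) ≠ 0)
    (hz : IsPrimitiveRoot z d) {κ : PartExp} (hκ : κ ∈ shortParts (l * r) l)
    (hne : κ ≠ Finsupp.single r l) :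
    reducedForm d ((1 - t ^ (d : ℕ)) / (1 - q ^ (d : ℕ)))
      (fun k => oneSubPowQuot d k t / oneSubPowQuot d k q) (partDepth d κ) (plethHMon d κ)
      (Qprime q t P (Multiset.replicate l r)) = 0 := by
  have horth : hallForm (plethHMon d κ) (P (Multiset.replicate l r)) = 0 := by
    rw [hP.hallForm_plethHMon_replicate hz hκ, if_neg hne]
  have hscale := hallForm_scaleHom_Qprime_eq_zero hq ht horth
  rw [hallForm_scaleHom_plethHMon fun k => ?_] at hscale
  · exact (mul_eq_zero.mp hscale).resolve_left (pow_ne_zero _ (div_ne_zero (ht d) (hq d)))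
  · rw [← mul_oneSubPowQuot d k, ← mul_oneSubPowQuot d k]
    split_ifs
    · exact (div_mul_div_comm _ _ _ _).symm
    · rw [one_mul, one_mul, one_mul]

section Specialization

variable {K : Type} [Field K] [CharZero K] {z : K} {d : ℕ+}

theorem det_reducedGram_zero_one_ne_zero (J : Finset PartExp) :
    (reducedGram d (0 : K) 1 J).det ≠ 0 := by
  have hmap := (algebraMap ℚ K).map_det (reducedGram d (0 : ℚ) 1 J)
  have hone : (algebraMap ℚ K ∘ (1 : ℕ+ → ℚ)) = 1 := funext fun _ => map_one _
  rw [map_reducedGram, map_zero, hone] at hmap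
  rw [← hmap]
  exact (map_ne_zero _).mpr (det_reducedGram_rat_ne_zero J)

theorem det_reducedGram_oneSubPowQuot_ne_zero (hz : IsPrimitiveRoot z d) (J : Finset PartExp) :
    (reducedGram d 0 (fun k => oneSubPowQuot d k (RatFunc.C z) / oneSubPowQuot d k RatFunc.X)
      J).det ≠ 0 := by
  have hg (k : ℕ+) : (oneSubPowQuot d k (RatFunc.C z) / oneSubPowQuot d k RatFunc.X, (1 : K)) ∈
      evalGraph z := by
    have hk := oneSubPowQuot_ne_zero_of_isPrimitiveRoot hz k
    rw [← div_self hk]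
    exact div_mem_evalGraph (oneSubPowQuot_mem_evalGraph (C_mem_evalGraph z) d k)
      (oneSubPowQuot_mem_evalGraph X_mem_evalGraph d k) hk
  exact ne_zero_of_mem_evalGraph (det_prod_mem fun κ κ' =>
      reducedForm_plethHMon_mem_evalGraph (zero_mem _) hg (partDepth d κ) κ κ')
    (det_reducedGram_zero_one_ne_zero J)

variable {J : Finset PartExp} {c : PartExp → RatFunc K}

theorem mem_evalGraph_zero_of_reducedForm_eq_zero {s : RatFunc K} {g : ℕ+ → RatFunc K}
    {g' : ℕ+ → K} (hs : (s, 0) ∈ evalGraph z) (hg : ∀ k, (g k, g' k) ∈ evalGraph z)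
    (hdet : (reducedGram d 0 g' J).det ≠ 0) {κ₀ : PartExp} {a : K}
    (hc₀ : (c κ₀, a) ∈ evalGraph z) (hcol : ∀ κ ∈ J,
      reducedForm d 0 g' (partDepth d κ) (plethHMon d κ) (plethHMon d κ₀) = 0)
    (horth : ∀ κ ∈ J, reducedForm d s g (partDepth d κ) (plethHMon d κ)
      (c κ₀ • plethHMon d κ₀ + ∑ κ' ∈ J, c κ' • plethHMon d κ') = 0) :
    ∀ κ ∈ J, (c κ, 0) ∈ evalGraph z := by
  refine fun κ hκ => mem_evalGraph_zero_of_mulVec (A := reducedGram d s g J)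
    (x := fun κ : J => c κ) (fun κ κ' => reducedForm_plethHMon_mem_evalGraph hs hg _ κ κ') hdet
    (fun κ => ?_) ⟨κ, hκ⟩
  have hentry := reducedForm_plethHMon_mem_evalGraph (d := d) hs hg (partDepth d κ) κ κ₀
  rw [hcol κ κ.2] at hentry
  have hneg := neg_mem (mul_mem hc₀ hentry)
  have hrow := horth κ κ.2
  rw [map_add, map_smul, smul_eq_mul, add_eq_zero_iff_neg_eq] at hrow
  rwa [Prod.mk_mul_mk, Prod.neg_mk, mul_zero, neg_zero, hrow, ← reducedGram_mulVec] at hneg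

theorem coeff_sum_plethHMon_mem_evalGraph {a : PartExp → K}
    (h : ∀ κ ∈ J, (c κ, a κ) ∈ evalGraph z) (m : PartExp) :
    (coeff m (∑ κ ∈ J, c κ • plethHMon d κ), coeff m (∑ κ ∈ J, a κ • plethHMon d κ)) ∈
      evalGraph z := by
  have hcoeff (κ : PartExp) : (coeff m (plethHMon (R := RatFunc K) d κ),
      coeff m (plethHMon (R := K) d κ)) ∈ evalGraph z := by
    have hrat := ratCast_mem_evalGraph (c := z) (coeff m (plethHMon d κ))
    rwa [← eq_ratCast (algebraMap ℚ (RatFunc K)), ← eq_ratCast (algebraMap ℚ K), ← coeff_map,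
      ← coeff_map, map_plethHMon, map_plethHMon] at hrat
  have hsum := sum_mem fun κ hκ => mul_mem (h κ hκ) (hcoeff κ)
  simpa only [coeff_sum, coeff_smul, smul_eq_mul, Prod.mk_mul_mk, ← prod_mk_sum] using hsum

end Specialization

section Rectangle

theorem plethHMon_single_mul {R : Type} [Field R] (d r : ℕ+) (m : ℕ) :
    plethHMon (R := R) d (Finsupp.single r (d * m)) = pleth (X d ^ m) (hsym (r : ℕ)) := by
  rw [← smul_eq_mul, ← Finsupp.smul_single, plethHMon_smul, hMon_single, map_pow, pleth, map_pow,
    aeval_X]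

theorem partSize_partQuo_single (d r : ℕ+) (m : ℕ) :
    partSize (partQuo d (Finsupp.single r (d * m))) = m * r := by
  rw [partQuo, Finsupp.mapRange_single, Nat.mul_div_cancel_left m d.pos, partSize_single]

theorem one_sub_X_pow_ne_zero {K : Type*} [Field K] {n : ℕ} (hn : n ≠ 0) :
    1 - (RatFunc.X : RatFunc K) ^ n ≠ 0 := by
  rw [← RatFunc.algebraMap_X, ← map_pow, ← map_one (algebraMap (Polynomial K) (RatFunc K)),
    ← map_sub]
  exact RatFunc.algebraMap_ne_zero (neg_sub (Polynomial.X ^ n) (1 : Polynomial K) ▸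
    neg_ne_zero.mpr (Polynomial.X_pow_sub_C_ne_zero (Nat.pos_of_ne_zero hn) 1))

theorem one_sub_C_pow_ne_zero {K : Type*} [Field K] {q : K} {n : ℕ} (hq : 1 - q ^ n ≠ 0) :
    1 - (RatFunc.C q) ^ n ≠ 0 := by
  rw [← map_pow, ← map_one RatFunc.C, ← map_sub]
  exact (map_ne_zero _).mpr hq

theorem one_sub_pow_div_mem_evalGraph {K : Type*} [Field K] {q z : K} {d : ℕ}
    (hq : 1 - q ^ d ≠ 0) (hz : z ^ d = 1) :
    ((1 - RatFunc.X ^ d) / (1 - RatFunc.C q ^ d), 0) ∈ evalGraph z := by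
  have hone (x : RatFunc K) (y : K) (h : (x, y) ∈ evalGraph z) :
      (1 - x ^ d, 1 - y ^ d) ∈ evalGraph z := sub_mem (one_mem _) (pow_mem h d)
  have hdiv := div_mem_evalGraph (hone _ _ X_mem_evalGraph) (hone _ _ (C_mem_evalGraph q)) hq
  rwa [hz, sub_self, zero_div] at hdiv

variable {k : Type} [Field k] [CharZero k] {zeta : k} {d r : ℕ+} {m : ℕ}
  {P : Multiset ℕ+ → SymFn (RatFunc (RatFunc k))}

theorem IsMacdonaldBasis.exists_Qprime_replicate_eq_sum_mem_evalGraph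
    (hP : IsMacdonaldBasis (RatFunc.C (RatFunc.X : RatFunc k)) RatFunc.X P)
    (hz : IsPrimitiveRoot zeta d) :
    ∃ c : PartExp → RatFunc (RatFunc k),
      Qprime (RatFunc.C (RatFunc.X : RatFunc k)) RatFunc.X P (Multiset.replicate (d * m) r) =
        ∑ κ ∈ shortParts (d * m * r) (d * m), c κ • plethHMon d κ ∧
      ∀ κ ∈ shortParts (d * m * r) (d * m), (c κ, if κ = Finsupp.single r (d * m)
        then (-1) ^ (m * r * (d - 1) : ℕ) else 0) ∈ evalGraph (RatFunc.C zeta) := by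
  have hq (n : ℕ+) : 1 - (RatFunc.X : RatFunc k) ^ (n : ℕ) ≠ 0 := one_sub_X_pow_ne_zero n.ne_zero
  have hqC (n : ℕ+) : 1 - RatFunc.C (RatFunc.X : RatFunc k) ^ (n : ℕ) ≠ 0 :=
    one_sub_C_pow_ne_zero (hq n)
  have ht (n : ℕ+) : 1 - (RatFunc.X : RatFunc (RatFunc k)) ^ (n : ℕ) ≠ 0 :=
    one_sub_X_pow_ne_zero n.ne_zero
  have hzC := hz.map_of_injective (RatFunc.C (K := k)).injective
  have hzCC := hzC.map_of_injective (RatFunc.C (K := RatFunc k)).injective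
  obtain ⟨c, hc₀, hQ⟩ := hP.exists_Qprime_replicate_eq_sum (r := r) (l := d * m) hqC ht hzCC
  rw [partSize_partQuo_single] at hc₀
  set κ₀ : PartExp := Finsupp.single r (d * m)
  set J := (shortParts (d * m * r) (d * m)).erase κ₀
  have hmem₀ : (c κ₀, (-1) ^ (m * r * (d - 1) : ℕ)) ∈ evalGraph (RatFunc.C zeta) :=
    hc₀ ▸ pow_mem (neg_mem (one_mem _)) _
  have hg (n : ℕ+) := div_mem_evalGraph
    (oneSubPowQuot_mem_evalGraph (X_mem_evalGraph (c := RatFunc.C zeta)) d n)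
    (oneSubPowQuot_mem_evalGraph (C_mem_evalGraph RatFunc.X) d n) (oneSubPowQuot_ne_zero (hq n))
  have hzero : ∀ κ ∈ J, (c κ, 0) ∈ evalGraph (RatFunc.C zeta) := by
    refine mem_evalGraph_zero_of_reducedForm_eq_zero
      (one_sub_pow_div_mem_evalGraph (hq d) hzC.pow_eq_one) hg
      (det_reducedGram_oneSubPowQuot_ne_zero hz J) hmem₀ (fun κ hκ => ?_) fun κ hκ => ?_
    · exact reducedForm_plethHMon_single_eq_zero _
        (mem_shortParts.mp (Finset.mem_of_mem_erase hκ)).2 (Finset.ne_of_mem_erase hκ)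
    · rw [Finset.add_sum_erase _ (fun κ => c κ • plethHMon d κ) (single_mem_shortParts _ _), ← hQ]
      exact hP.reducedForm_Qprime_replicate_eq_zero hqC ht hzCC (Finset.mem_of_mem_erase hκ)
        (Finset.ne_of_mem_erase hκ)
  refine ⟨c, hQ, fun κ hκ => ?_⟩
  split_ifs with hκ₀
  · exact hκ₀ ▸ hmem₀
  · exact hzero κ (Finset.mem_erase.mpr ⟨hκ₀, hκ⟩)

theorem Qprime_rectangle_dth_root_of_unity_general {l : ℕ} (hdl : (d : ℕ) ∣ l)
    (hzeta : IsPrimitiveRoot zeta d)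
    (hP : IsMacdonaldBasis (RatFunc.C (RatFunc.X : RatFunc k)) RatFunc.X P) (μ : PartExp) :
    (coeff μ (Qprime (RatFunc.C (RatFunc.X : RatFunc k)) RatFunc.X P (Multiset.replicate l r)),
      coeff μ ((-1 : RatFunc k) ^ (r * l * (d - 1) / d : ℕ) •
        pleth (X d ^ (l / d : ℕ)) (hsym (r : ℕ)))) ∈ evalGraph (RatFunc.C zeta) := by
  obtain ⟨m, rfl⟩ := hdl
  obtain ⟨c, hQ, hc⟩ :=
    hP.exists_Qprime_replicate_eq_sum_mem_evalGraph (r := r) (m := m) hzeta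
  have hexp : (r * (d * m) * (d - 1) / d : ℕ) = m * r * (d - 1) :=
    Nat.div_eq_of_eq_mul_right d.pos (by ring)
  have hmem := coeff_sum_plethHMon_mem_evalGraph (d := d) hc μ
  simpa only [← hQ, ite_smul, zero_smul, Finset.sum_ite_eq', if_pos (single_mem_shortParts _ _),
    plethHMon_single_mul, hexp, Nat.mul_div_cancel_left m d.pos] using hmem

end Rectangle

theorem specT_eq_of_mem_evalGraph {c : KK} {f : SymFn FF} {F : SymFn KK}
    (h : ∀ μ, (coeff μ f, coeff μ F) ∈ evalGraph c) : specT c f = F := by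
  have heval (μ : PartExp) : evalT c (coeff μ f) = coeff μ F := eval_of_mem_evalGraph (h μ)
  have hsub : F.support ⊆ f.support := fun μ hμ =>
    mem_support_iff.mpr (ne_zero_of_mem_evalGraph (h μ) (mem_support_iff.mp hμ))
  conv_rhs => rw [F.as_sum]
  simp only [specT, heval]
  exact (Finset.sum_subset hsub fun μ _ hμ => by
    rw [notMem_support_iff.mp hμ, monomial_zero]).symm

/-- **Generalized plethystic formula for `Q'` at a `d`-th root of unity, `d ∣ l`**
(Proposition 6.2 of the paper).  Let `r, l` be positive integers, `d ∣ l`, and `ζ_d` a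
primitive `d`-th root of unity.  Then
`Q'_{(r^l)}(x; q, ζ_d) = (-1)^{rl(d-1)/d} (p_d^{l/d} ∘ h_r)(x)`. -/
theorem Qprime_rectangle_dth_root_of_unity
    (l r d : ℕ) (hl : 0 < l) (hr : 0 < r) (hd : 0 < d) (hdl : d ∣ l)
    (zeta : ℂ) (hzeta : IsPrimitiveRoot zeta d)
    (P : Multiset ℕ+ → SymFn FF) (hP : IsMacdonaldBasis qF tF P) :
    specT (RatFunc.C zeta) (Qprime qF tF P (Multiset.replicate l ⟨r, hr⟩)) =
      ((-1 : KK) ^ (r * l * (d - 1) / d)) •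
        pleth ((X (⟨d, hd⟩ : ℕ+) : SymFn KK) ^ (l / d)) (hsym (R := KK) r) :=
  specT_eq_of_mem_evalGraph
    (Qprime_rectangle_dth_root_of_unity_general (d := ⟨d, hd⟩) (r := ⟨r, hr⟩) hdl hzeta hP)
end
end

section
/- Let τ be a cyclic permutation of length k, Γ the cyclic subgroup of the symmetric group S_k generated by τ, and j a nonnegative integer less than k. Then the Frobenius characteristic of the representation of S_k induced from the one-dimensional representation γ_j : τ ↦ ζ_k^j of Γ equals l_k^{(j)}(x) = (1/k) · Σ_{d | k} c(j,d) · p_d^{k/d}(x). -/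
open MvPolynomial

noncomputable section

open MvPolynomial

/-- `p_m = ∏ p_d` over a multiset `m` of natural numbers (over `ℂ`). -/
def pPartsC (m : Multiset ℕ) : SymFn ℂ := (m.map fun d => pN (R := ℂ) d).prod

/-- The Frobenius characteristic of a class function `χ` on `S_k`:
`(1/k!) ∑_{σ ∈ S_k} χ(σ) p_{cycle type(σ)}`. -/
def frobChar (k : ℕ) (chi : Equiv.Perm (Fin k) → ℂ) : SymFn ℂ :=
  ((Nat.factorial k : ℂ))⁻¹ • ∑ σ : Equiv.Perm (Fin k), chi σ • pPartsC σ.partition.parts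

/-- The extension by zero to `S_k` of the one-dimensional character `γ_j : τ^m ↦ ζ^{jm}`
of the cyclic subgroup generated by `τ` (for `τ` of order `k`, the exponent `m` with
`0 ≤ m < k` is unique). -/
def cyclicCharExt (k : ℕ) (tau : Equiv.Perm (Fin k)) (zeta : ℂ) (j : ℕ)
    (g : Equiv.Perm (Fin k)) : ℂ :=
  ∑ m ∈ Finset.range k, if g = tau ^ m then zeta ^ (j * m) else 0

/-- The character of the representation of `S_k` induced from the character `γ_j` of the
cyclic subgroup `Γ = ⟨τ⟩`, by the Frobenius formula
`ind(σ) = (1/|Γ|) ∑_{x ∈ S_k} γ_j°(x σ x⁻¹)`. -/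
def inducedCyclicChar (k : ℕ) (tau : Equiv.Perm (Fin k)) (zeta : ℂ) (j : ℕ)
    (σ : Equiv.Perm (Fin k)) : ℂ :=
  ((Nat.card (Subgroup.zpowers tau) : ℂ))⁻¹ *
    ∑ x : Equiv.Perm (Fin k), cyclicCharExt k tau zeta j (x * σ * x⁻¹)

/-! Summing against the conjugation-invariant function `σ ↦ p_{cycle type(σ)}` undoes induction, so
the characteristic is the average of `ζ^{jm} p_{cycle type(τ^m)}` over the powers of `τ`. Since
`⟨τ⟩` acts freely, all cycles of `τ^m` have length `d`, the order of `τ^m`, which is also the order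
of `ζ^m`; the term is thus `ζ^{jm} p_d^{k/d}`. Grouping the `k`-th roots of unity `ζ^m` by their
order `d` collects the coefficient `c(j,d)` of `p_d^{k/d}`. -/

section CycleStructure

open Equiv Finset Function

variable {α : Type*} {σ τ : Perm α}

theorem minimalPeriod_eq_card_of_isCycleOn {s : Finset α} (hσ : σ.IsCycleOn s) {x : α}
    (hx : x ∈ s) : minimalPeriod σ x = #s :=
  eq_of_forall_dvd fun n => by
    rw [← isPeriodicPt_iff_minimalPeriod_dvd, ← hσ.pow_apply_eq hx, IsPeriodicPt, IsFixedPt,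
      Perm.iterate_eq_pow]

theorem pow_apply_eq_self_iff_of_isCycleOn_univ (hτ : τ.IsCycleOn Set.univ) {n : ℕ} {x : α} :
    (τ ^ n) x = x ↔ τ ^ n = 1 := by
  refine ⟨fun hx => Perm.ext fun y => ?_, fun h => by rw [h, Perm.one_apply]⟩
  obtain ⟨i, rfl⟩ := hτ.2 (Set.mem_univ x) (Set.mem_univ y)
  calc (τ ^ n) ((τ ^ i) x)
    _ = (τ ^ i) ((τ ^ n) x) := by rw [← zpow_natCast, Perm.zpow_apply_comm]
    _ = (τ ^ i) x := by rw [hx]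

theorem minimalPeriod_pow_eq_orderOf_of_isCycleOn_univ (hτ : τ.IsCycleOn Set.univ) (m : ℕ)
    (x : α) : minimalPeriod (τ ^ m) x = orderOf (τ ^ m) :=
  eq_of_forall_dvd fun n => by
    rw [← isPeriodicPt_iff_minimalPeriod_dvd, orderOf_dvd_iff_pow_eq_one, ← pow_mul,
      ← pow_apply_eq_self_iff_of_isCycleOn_univ hτ, IsPeriodicPt, IsFixedPt, Perm.iterate_eq_pow,
      pow_mul]

variable [Fintype α]

theorem orderOf_eq_card_of_isCycleOn_univ [Nonempty α] (hτ : τ.IsCycleOn Set.univ) :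
    orderOf τ = Fintype.card α :=
  eq_of_forall_dvd fun n => by
    rw [← coe_univ] at hτ
    simp only [orderOf_dvd_iff_pow_eq_one, Perm.ext_iff, Perm.one_apply,
      hτ.pow_apply_eq (mem_univ _), card_univ, forall_const]

variable [DecidableEq α]

theorem exists_minimalPeriod_eq_of_mem_parts_partition {n : ℕ} (hn : n ∈ σ.partition.parts) :
    ∃ x, minimalPeriod σ x = n := by
  rw [Perm.parts_partition, Multiset.mem_add] at hn
  obtain hcycle | hfixed := hn
  · rw [Perm.cycleType_def, Multiset.mem_map] at hcycle
    obtain ⟨c, hc, rfl⟩ := hcycle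
    obtain ⟨x, hx⟩ := (Perm.mem_cycleFactorsFinset_iff.1 hc).1.nonempty_support
    exact ⟨x, minimalPeriod_eq_card_of_isCycleOn
      (Perm.isCycleOn_support_of_mem_cycleFactorsFinset hc) hx⟩
  · obtain ⟨hne, rfl⟩ := Multiset.mem_replicate.1 hfixed
    obtain ⟨x, hx⟩ : ∃ x, x ∉ σ.support := by
      contrapose! hne
      rw [eq_univ_of_forall hne, card_univ, Nat.sub_self]
    exact ⟨x, minimalPeriod_eq_one_iff_isFixedPt.2 (Perm.notMem_support.1 hx)⟩

theorem parts_partition_eq_replicate {d : ℕ} (hσ : ∀ x, minimalPeriod σ x = d) :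
    σ.partition.parts = Multiset.replicate (Fintype.card α / d) d := by
  have hparts : ∀ n ∈ σ.partition.parts, n = d := fun n hn => by
    obtain ⟨x, rfl⟩ := exists_minimalPeriod_eq_of_mem_parts_partition hn
    exact hσ x
  obtain ⟨r, hr⟩ : ∃ r, σ.partition.parts = Multiset.replicate r d :=
    ⟨_, Multiset.eq_replicate_card.2 hparts⟩
  have hsum : r * d = Fintype.card α := by
    rw [← σ.partition.parts_sum, hr, Multiset.sum_replicate, smul_eq_mul]
  obtain rfl | hr_pos := r.eq_zero_or_pos
  · rw [hr, ← hsum, zero_mul, Nat.zero_div]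
  · have hd : 0 < d := σ.partition.parts_pos (hr ▸ Multiset.mem_replicate.2 ⟨hr_pos.ne', rfl⟩)
    rw [hr, ← hsum, Nat.mul_div_cancel r hd]

theorem parts_partition_pow_of_isCycleOn_univ (hτ : τ.IsCycleOn Set.univ) (m : ℕ) :
    (τ ^ m).partition.parts =
      Multiset.replicate (Fintype.card α / orderOf (τ ^ m)) (orderOf (τ ^ m)) :=
  parts_partition_eq_replicate (minimalPeriod_pow_eq_orderOf_of_isCycleOn_univ hτ m)

theorem partition_conj (ρ σ : Perm α) : (ρ * σ * ρ⁻¹).partition = σ.partition :=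
  (Perm.partition_eq_of_isConj.1 (isConj_iff.2 ⟨ρ, rfl⟩)).symm

end CycleStructure

section Induction

theorem sum_sum_conj_smul {G R M : Type*} [Group G] [Fintype G] [Semiring R] [AddCommMonoid M]
    [Module R M] (f : G → R) {F : G → M} (hF : ∀ x g, F (x * g * x⁻¹) = F g) :
    ∑ g, (∑ x, f (x * g * x⁻¹)) • F g = Fintype.card G • ∑ g, f g • F g := by
  have hconj (x : G) : ∑ g, f (x * g * x⁻¹) • F g = ∑ g, f g • F g := by
    rw [← Equiv.sum_comp (MulAut.conj x).toEquiv fun g => f g • F g]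
    exact Finset.sum_congr rfl fun g _ => by rw [← hF x g]; rfl
  simp_rw [Finset.sum_smul]
  rw [Finset.sum_comm]
  simp_rw [hconj, Finset.sum_const, Finset.card_univ]

theorem sum_cyclicCharExt_smul {M : Type*} [AddCommMonoid M] [Module ℂ M] (k : ℕ)
    (τ : Equiv.Perm (Fin k)) (ζ : ℂ) (j : ℕ) (F : Equiv.Perm (Fin k) → M) :
    ∑ g, cyclicCharExt k τ ζ j g • F g = ∑ m ∈ Finset.range k, ζ ^ (j * m) • F (τ ^ m) := by
  simp_rw [cyclicCharExt, Finset.sum_smul, ite_smul, zero_smul]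
  rw [Finset.sum_comm]
  simp_rw [Finset.sum_ite_eq', Finset.mem_univ, if_true]

theorem frobChar_inducedCyclicChar (k : ℕ) (τ : Equiv.Perm (Fin k)) (ζ : ℂ) (j : ℕ) :
    frobChar k (inducedCyclicChar k τ ζ j) = (Nat.card (Subgroup.zpowers τ) : ℂ)⁻¹ •
      ∑ m ∈ Finset.range k, ζ ^ (j * m) • pPartsC (τ ^ m).partition.parts := by
  have hconj (x g : Equiv.Perm (Fin k)) :
      pPartsC (x * g * x⁻¹).partition.parts = pPartsC g.partition.parts := by
    rw [partition_conj]
  have hcard : Fintype.card (Equiv.Perm (Fin k)) = k.factorial := by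
    rw [Fintype.card_perm, Fintype.card_fin]
  have hfact : (k.factorial : ℂ) ≠ 0 := Nat.cast_ne_zero.2 k.factorial_ne_zero
  simp_rw [frobChar, inducedCyclicChar, mul_smul, ← Finset.smul_sum]
  rw [sum_sum_conj_smul _ hconj, sum_cyclicCharExt_smul, hcard,
    ← Nat.cast_smul_eq_nsmul ℂ, smul_comm, inv_smul_smul₀ hfact]

theorem pPartsC_replicate (n d : ℕ) : pPartsC (Multiset.replicate n d) = pN d ^ n := by
  rw [pPartsC, Multiset.map_replicate, Multiset.prod_replicate]

end Induction

section RootsOfUnity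

open Finset

theorem sum_range_pow_eq_sum_divisors_sum_primitiveRoots {R M : Type*} [CommRing R] [IsDomain R]
    [AddCommMonoid M] {k : ℕ} {ζ : R} (hζ : IsPrimitiveRoot ζ k) (f : R → M) :
    ∑ m ∈ range k, f (ζ ^ m) = ∑ d ∈ k.divisors, ∑ z ∈ primitiveRoots d R, f z := by
  classical
  have hroots : (Polynomial.nthRootsFinset k (1 : R)).val = (Multiset.range k).map (ζ ^ ·) := by
    rw [Polynomial.nthRootsFinset_def, Multiset.toFinset_val, hζ.nthRoots_one_nodup.dedup,
      hζ.nthRoots_eq (one_pow k)]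
    simp only [mul_one]
  rw [← sum_biUnion fun _ _ _ _ => IsPrimitiveRoot.disjoint,
    ← IsPrimitiveRoot.nthRoots_one_eq_biUnion_primitiveRoots, Finset.sum, Finset.sum, hroots,
    Multiset.map_map, range_val]
  rfl

theorem sum_range_pow_smul_eq_sum_cRam_smul {R : Type} [Field R] {M : Type*} [AddCommMonoid M]
    [Module R M] {k : ℕ} {ζ : R} (hζ : IsPrimitiveRoot ζ k) (j : ℕ) (F : ℕ → M) :
    ∑ m ∈ range k, ζ ^ (j * m) • F (orderOf (ζ ^ m)) =
      ∑ d ∈ k.divisors, (cRam j d : R) • F d := by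
  simp_rw [mul_comm j, pow_mul, cRam, sum_smul]
  rw [sum_range_pow_eq_sum_divisors_sum_primitiveRoots hζ fun z => z ^ j • F (orderOf z)]
  refine sum_congr rfl fun d _ => sum_congr rfl fun z hz => ?_
  rw [(isPrimitiveRoot_of_mem_primitiveRoots hz).eq_orderOf]

end RootsOfUnity

theorem frobenius_char_induced_cyclic_general (k : ℕ) (hk : 0 < k) (tau : Equiv.Perm (Fin k))
    (htau : tau.IsCycleOn Set.univ) (zeta : ℂ) (hzeta : IsPrimitiveRoot zeta k) (j : ℕ) :
    frobChar k (inducedCyclicChar k tau zeta j) = lchar (R := ℂ) k j := by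
  have : Nonempty (Fin k) := ⟨⟨0, hk⟩⟩
  have hcard : orderOf tau = k := by
    rw [orderOf_eq_card_of_isCycleOn_univ htau, Fintype.card_fin]
  have horder (m : ℕ) : orderOf (tau ^ m) = orderOf (zeta ^ m) := by
    simp_rw [orderOf_eq_orderOf_iff, ← pow_mul, ← orderOf_dvd_iff_pow_eq_one, hcard,
      ← hzeta.eq_orderOf, implies_true]
  calc frobChar k (inducedCyclicChar k tau zeta j)
    _ = (k : ℂ)⁻¹ • ∑ m ∈ Finset.range k,
          zeta ^ (j * m) • pPartsC (tau ^ m).partition.parts := by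
      rw [frobChar_inducedCyclicChar, Nat.card_zpowers, hcard]
    _ = (k : ℂ)⁻¹ • ∑ m ∈ Finset.range k,
          zeta ^ (j * m) • pN (orderOf (zeta ^ m)) ^ (k / orderOf (zeta ^ m)) := by
      simp_rw [parts_partition_pow_of_isCycleOn_univ htau, pPartsC_replicate, horder,
        Fintype.card_fin]
    _ = lchar k j := by
      rw [sum_range_pow_smul_eq_sum_cRam_smul hzeta j fun d => pN d ^ (k / d), lchar]

/-- **Foulkes' formula for the Frobenius characteristic of induced cyclic characters**
(Proposition 7.1 of the paper).  Let `τ` be a cyclic permutation of length `k`, `Γ = ⟨τ⟩`,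
`ζ_k` a primitive `k`-th root of unity and `0 ≤ j < k`.  The Frobenius characteristic of
the representation of `S_k` induced from `γ_j : τ ↦ ζ_k^j` is
`l_k^{(j)} = (1/k) ∑_{d ∣ k} c(j,d) p_d^{k/d}`, where `c(j,d)` is the Ramanujan sum. -/
theorem frobenius_char_induced_cyclic
    (k : ℕ) (hk : 0 < k) (tau : Equiv.Perm (Fin k))
    (htau : tau.IsCycleOn Set.univ)
    (zeta : ℂ) (hzeta : IsPrimitiveRoot zeta k) (j : ℕ) (hj : j < k) :
    frobChar k (inducedCyclicChar k tau zeta j) = lchar (R := ℂ) k j :=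
  frobenius_char_induced_cyclic_general k hk tau htau zeta hzeta j
end
end
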